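/- For every integer n ≥ 1 and real q > 1, there exists a surjective unital *-homomorphism φ : A_n(q) → A_{n−1}(q) whose kernel is isomorphic, as a (non-unital) C*-algebra via a *-algebra isomorphism, to C(𝕋, K(H_n)), the C*-algebra of continuous functions from the circle into the compact operators on H_n (which is C(𝕋) ⊗ K(ℓ²(ℕⁿ))). Equivalently, there is a short exact sequence of C*-algebras 0 → C(𝕋) ⊗ K(ℓ²(ℤ_{≥0}ⁿ)) → C(S_q^{2n+1}) → C(S_q^{2n−1}) → 0. -/

import Mathlib

set_option synthInstance.maxHeartbeats 1000000
set_option maxHeartbeats 4000000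

noncomputable section

/-- The Hilbert space `ℓ²(ℤ) ⊗ H_n = ℓ²(ℤ × ℕⁿ)`, where `H_n = ℓ²(ℕⁿ)`. -/
abbrev HZ (n : ℕ) : Type := lp (fun _ : ℤ × (Fin n → ℕ) => ℂ) 2

/-- The standard orthonormal basis vectors `e_m ⊗ e_k` of `ℓ²(ℤ × ℕⁿ)`. -/
def ez {n : ℕ} (m : ℤ) (k : Fin n → ℕ) : HZ n := lp.single 2 (m, k) 1

/-- For an index `j` with `1 ≤ j+1 ≤ n` (so `w_{j+2} = γ^{⊗(n-1-j)} ⊗ α* ⊗ 1^{⊗j}`),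
the (0-based) coordinate `n - 1 - j` at which the shift `α*` acts. -/
def shiftIdx {n : ℕ} (j : Fin n) : Fin n := ⟨n - 1 - (j : ℕ), by have := j.isLt; omega⟩

/-- `IsVFamily q v` says that `v 0, …, v n` are the operators `v_i = S ⊗ w_i`
(`1 ≤ i ≤ n+1`) on `ℓ²(ℤ) ⊗ ℓ²(ℕⁿ)`, where `S` is the bilateral shift and
`w_1 e_k = q^{-(k_1+⋯+k_n)} e_k`,
`w_i e_k = q^{-(k_1+⋯+k_{n+1-i})} (1-q^{-2(k_{n+2-i}+1)})^{1/2} e_{k+δ_{n+2-i}}` for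
`2 ≤ i ≤ n+1`.  The `v_i` are the images of the generators `u_{n+1,i}` of
`C(S_q^{2n+1})` under the faithful representation `(τ'_{n+1} ⊗ π_{n(n-1)⋯21})Δⁿ`. -/
def IsVFamily (q : ℝ) {n : ℕ} (v : Fin (n + 1) → (HZ n →L[ℂ] HZ n)) : Prop :=
  (∀ (m : ℤ) (k : Fin n → ℕ),
    v 0 (ez m k) = (q ^ (-(∑ s, (k s : ℤ)))) • ez (m + 1) k) ∧
  (∀ (j : Fin n) (m : ℤ) (k : Fin n → ℕ),
    v j.succ (ez m k) =
      ((q ^ (-(∑ s ∈ Finset.univ.filter (fun s : Fin n => (s : ℕ) < n - 1 - (j : ℕ)), (k s : ℤ)))) *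
          Real.sqrt (1 - q ^ (-2 * ((k (shiftIdx j) : ℤ) + 1)))) •
        ez (m + 1) (Function.update k (shiftIdx j) (k (shiftIdx j) + 1)))

/-- `A_n(q)`: the unital C*-subalgebra of bounded operators on `ℓ²(ℤ) ⊗ ℓ²(ℕⁿ)` generated
by `v_1, …, v_{n+1}`; the concrete realization of the quantum sphere algebra
`C(S_q^{2n+1})`. -/
def sphereAlg {n : ℕ} (v : Fin (n + 1) → (HZ n →L[ℂ] HZ n)) :
    StarSubalgebra ℂ (HZ n →L[ℂ] HZ n) :=
  (StarAlgebra.adjoin ℂ (Set.range v)).topologicalClosure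

/-- The Hilbert space `H_n = ℓ²(ℕⁿ)`. -/
abbrev Hn (n : ℕ) : Type := lp (fun _ : (Fin n → ℕ) => ℂ) 2
noncomputable section

/-- The compact operators on a complex Hilbert space `X`, as a non-unital star subalgebra
of the bounded operators (a C*-algebra).  By Schauder's theorem the condition that the
adjoint `star T` is also compact is automatic, so the carrier is exactly the set of
compact operators. -/
def compactOps (X : Type*) [NormedAddCommGroup X] [InnerProductSpace ℂ X]
    [CompleteSpace X] : NonUnitalStarSubalgebra ℂ (X →L[ℂ] X) where
  carrier := {T | IsCompactOperator ⇑T ∧ IsCompactOperator ⇑(star T)}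
  zero_mem' := by
    constructor <;> simpa using (isCompactOperator_zero (M₁ := X) (M₂ := X))
  add_mem' := by
    rintro a b ⟨ha1, ha2⟩ ⟨hb1, hb2⟩
    refine ⟨?_, ?_⟩
    · simpa [ContinuousLinearMap.coe_add] using ha1.add hb1
    · rw [star_add]; simpa [ContinuousLinearMap.coe_add] using ha2.add hb2
  mul_mem' := by
    rintro a b ⟨ha1, ha2⟩ ⟨hb1, hb2⟩
    refine ⟨?_, ?_⟩
    · simpa [ContinuousLinearMap.mul_def, ContinuousLinearMap.coe_comp] using ha1.comp_clm b
    · rw [star_mul]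
      simpa [ContinuousLinearMap.mul_def, ContinuousLinearMap.coe_comp] using
        hb2.comp_clm (star a)
  smul_mem' := by
    rintro c a ⟨ha1, ha2⟩
    refine ⟨?_, ?_⟩
    · simpa [ContinuousLinearMap.coe_smul] using ha1.smul c
    · rw [star_smul]; simpa [ContinuousLinearMap.coe_smul] using ha2.smul (star c)
  star_mem' := by
    rintro a ⟨ha1, ha2⟩
    exact ⟨ha2, by simpa [star_star] using ha1⟩
/-- The C*-algebra `C(𝕋, K(X)) = C(𝕋) ⊗ K(X)` of continuous functions from the circle
into the compact operators on a complex Hilbert space `X`, as a non-unital star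
subalgebra of `C(𝕋, B(X))`. -/
def compactValued (X : Type*) [NormedAddCommGroup X] [InnerProductSpace ℂ X]
    [CompleteSpace X] : NonUnitalStarSubalgebra ℂ C(Circle, X →L[ℂ] X) where
  carrier := {f | ∀ z, f z ∈ compactOps X}
  zero_mem' := by intro z; simpa using zero_mem (compactOps X)
  add_mem' := by
    intro f g hf hg z
    simpa using add_mem (hf z) (hg z)
  mul_mem' := by
    intro f g hf hg z
    simpa using mul_mem (hf z) (hg z)
  smul_mem' := by
    intro c f hf z
    simpa using SMulMemClass.smul_mem c (hf z)
  star_mem' := by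
    intro f hf z
    simpa using star_mem (hf z)

/-- The kernel of a unital *-homomorphism, as a non-unital star subalgebra (a closed
two-sided star-ideal) of the domain. -/
def starAlgHomKer {A B : Type*} [Semiring A] [Algebra ℂ A] [StarRing A]
    [Semiring B] [Algebra ℂ B] [StarRing B] (φ : A →⋆ₐ[ℂ] B) :
    NonUnitalStarSubalgebra ℂ A where
  carrier := {x | φ x = 0}
  zero_mem' := by simp
  add_mem' := by
    intro a b ha hb
    simp only [Set.mem_setOf_eq] at *
    simp [map_add, ha, hb]
  mul_mem' := by
    intro a b ha hb
    simp only [Set.mem_setOf_eq] at *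
    simp [map_mul, ha, hb]
  smul_mem' := by
    intro c a ha
    simp only [Set.mem_setOf_eq] at *
    simp [map_smul, ha]
  star_mem' := by
    intro a ha
    simp only [Set.mem_setOf_eq] at *
    simp [map_star, ha]

section ShortcutInstances

variable (X : Type*) [NormedAddCommGroup X] [InnerProductSpace ℂ X] [CompleteSpace X]

-- Shortcut instances (all definitionally the canonical ones) to speed up elaboration.
instance : SMul ℂ ↥(compactValued X) := inferInstance
instance : Add ↥(compactValued X) := inferInstance
instance : Mul ↥(compactValued X) := inferInstance
instance : Star ↥(compactValued X) := inferInstance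

variable {A B : Type*} [Semiring A] [Algebra ℂ A] [StarRing A]
    [Semiring B] [Algebra ℂ B] [StarRing B] (φ : A →⋆ₐ[ℂ] B)

instance : SMul ℂ ↥(starAlgHomKer φ) := inferInstance
instance : Add ↥(starAlgHomKer φ) := inferInstance
instance : Mul ↥(starAlgHomKer φ) := inferInstance
instance : Star ↥(starAlgHomKer φ) := inferInstance

end ShortcutInstances


section Generic

open scoped InnerProductSpace

/-- `ℓ²(ι)`. -/
abbrev Hl (ι : Type) : Type := lp (fun _ : ι => ℂ) 2

variable {ι : Type} [DecidableEq ι]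

/-- Standard basis vector. -/
def bv (i : ι) : Hl ι := lp.single 2 i 1

theorem bv_apply (i j : ι) : (bv i : Hl ι) j = if j = i then 1 else 0 := by
  unfold bv
  by_cases h : j = i
  · subst h; simp
  · rw [lp.single_apply_ne _ _ _ h]; simp [h]

theorem inner_bv (i : ι) (x : Hl ι) : ⟪bv i, x⟫_ℂ = x i := by
  unfold bv
  rw [lp.inner_single_left]; simp

theorem bv_orthonormal : Orthonormal ℂ (bv : ι → Hl ι) := by
  rw [orthonormal_iff_ite]
  intro i j
  rw [inner_bv, bv_apply]

theorem single_eq_smul_bv (i : ι) (c : ℂ) : (lp.single 2 i c : Hl ι) = c • bv i := by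
  unfold bv
  rw [← lp.single_smul]; simp

theorem hasSum_bv (x : Hl ι) : HasSum (fun i => x i • bv i) x := by
  have := lp.hasSum_single (p := 2) (by simp) x
  simpa only [single_eq_smul_bv] using this

theorem mem_of_bv (K : Submodule ℂ (Hl ι)) (hK : IsClosed (K : Set (Hl ι)))
    (h : ∀ i, bv i ∈ K) (x : Hl ι) : x ∈ K := by
  refine hK.mem_of_tendsto (hasSum_bv x) (Filter.Eventually.of_forall fun s => ?_)
  exact Submodule.sum_mem _ fun i _ => K.smul_mem _ (h i)

theorem ext_bv {F : Type*} [NormedAddCommGroup F] [NormedSpace ℂ F] {S T : Hl ι →L[ℂ] F}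
    (h : ∀ i, S (bv i) = T (bv i)) : S = T := by
  ext1 x
  have := (hasSum_bv x).mapL S
  have h2 := (hasSum_bv x).mapL T
  simp only [map_smul, h] at this h2
  exact this.unique h2

theorem orth_family {κ : Type} {E : Type*} [NormedAddCommGroup E] [InnerProductSpace ℂ E] {w : κ → E}
    (hw : Orthonormal ℂ w) :
    OrthogonalFamily ℂ (fun _ : κ => ℂ) fun i => LinearIsometry.toSpanSingleton ℂ E (hw.1 i) :=
  hw.orthogonalFamily

/-- Isometry from an orthonormal family. -/
def isoOf {E : Type*} [NormedAddCommGroup E] [InnerProductSpace ℂ E] [CompleteSpace E] {w : ι → E}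
    (hw : Orthonormal ℂ w) : Hl ι →L[ℂ] E :=
  (orth_family hw).linearIsometry.toContinuousLinearMap

theorem isoOf_bv {E : Type*} [NormedAddCommGroup E] [InnerProductSpace ℂ E] [CompleteSpace E]
    {w : ι → E} (hw : Orthonormal ℂ w) (i : ι) : isoOf hw (bv i) = w i := by
  unfold isoOf bv
  have := (orth_family hw).linearIsometry_apply_single (i := i) (1 : ℂ)
  simpa using this

theorem isoOf_norm {E : Type*} [NormedAddCommGroup E] [InnerProductSpace ℂ E] [CompleteSpace E]
    {w : ι → E} (hw : Orthonormal ℂ w) (x : Hl ι) : ‖isoOf hw x‖ = ‖x‖ :=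
  (orth_family hw).linearIsometry.norm_map x

theorem isoOf_inner {E : Type*} [NormedAddCommGroup E] [InnerProductSpace ℂ E] [CompleteSpace E]
    {w : ι → E} (hw : Orthonormal ℂ w) (x y : Hl ι) : ⟪isoOf hw x, isoOf hw y⟫_ℂ = ⟪x, y⟫_ℂ :=
  (orth_family hw).linearIsometry.inner_map_map x y

theorem adjoint_coord {E : Type*} [NormedAddCommGroup E] [InnerProductSpace ℂ E] [CompleteSpace E]
    (T : Hl ι →L[ℂ] E) (y : E) (i : ι) :
    (ContinuousLinearMap.adjoint T y) i = ⟪T (bv i), y⟫_ℂ := by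
  rw [← inner_bv, ContinuousLinearMap.adjoint_inner_right]

theorem adjoint_isoOf {E : Type*} [NormedAddCommGroup E] [InnerProductSpace ℂ E] [CompleteSpace E]
    {w : ι → E} (hw : Orthonormal ℂ w) (x : Hl ι) :
    ContinuousLinearMap.adjoint (isoOf hw) (isoOf hw x) = x := by
  ext i
  rw [adjoint_coord, isoOf_inner, inner_bv]

theorem norm_le_of_weights {E : Type*} [NormedAddCommGroup E] [InnerProductSpace ℂ E]
    (T : Hl ι →L[ℂ] E) {w : ι → E} (hw : Orthonormal ℂ w) (d : ι → ℂ) {ε : ℝ} (hε : 0 ≤ ε)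
    (hd : ∀ i, ‖d i‖ ≤ ε) (hT : ∀ i, T (bv i) = d i • w i) : ‖T‖ ≤ ε := by
  refine ContinuousLinearMap.opNorm_le_bound _ hε fun x => ?_
  have h1 := ((hasSum_bv x).mapL T).norm
  have h2 := ((hasSum_bv x).norm).const_mul ε
  refine le_of_tendsto_of_tendsto' h1 h2 fun s => ?_
  have e1 : ‖∑ i ∈ s, T (x i • bv i)‖ ^ 2 = ∑ i ∈ s, ‖x i * d i‖ ^ 2 := by
    have := (orth_family hw).norm_sum (fun i => x i * d i) s
    simpa [hT, smul_smul] using this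
  have e2 : ‖∑ i ∈ s, x i • (bv i : Hl ι)‖ ^ 2 = ∑ i ∈ s, ‖x i‖ ^ 2 := by
    have := (orth_family (bv_orthonormal (ι := ι))).norm_sum (fun i => x i) s
    simpa using this
  refine le_of_sq_le_sq ?_ (by positivity)
  rw [e1, mul_pow, e2, Finset.mul_sum]
  refine Finset.sum_le_sum fun i _ => ?_
  rw [norm_mul, mul_pow, mul_comm]
  have := hd i
  gcongr

end Generic


section AbstractClosure

variable {A : Type*} [NormedRing A] [NormedAlgebra ℂ A]

theorem abs_closure_le (s : Set A) (S : Submodule ℂ A) (hS : IsClosed (S : Set A))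
    (h : ∀ x ∈ s, x ∈ S) : (Submodule.span ℂ s).topologicalClosure ≤ S :=
  Submodule.topologicalClosure_minimal _ (Submodule.span_le.2 h) hS

theorem abs_closure_right (s : Set A) (S : Submodule ℂ A) (hS : IsClosed (S : Set A)) (T : A)
    (h : ∀ x ∈ s, x * T ∈ S) {X : A} (hX : X ∈ (Submodule.span ℂ s).topologicalClosure) :
    X * T ∈ S := by
  have hc : Continuous fun X : A => X * T := continuous_id.mul continuous_const
  exact abs_closure_le s (S.comap (LinearMap.mulRight ℂ T)) (hS.preimage hc) h hX

theorem abs_closure_left (s : Set A) (S : Submodule ℂ A) (hS : IsClosed (S : Set A)) (T : A)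
    (h : ∀ x ∈ s, T * x ∈ S) {X : A} (hX : X ∈ (Submodule.span ℂ s).topologicalClosure) :
    T * X ∈ S := by
  have hc : Continuous fun X : A => T * X := continuous_const.mul continuous_id
  exact abs_closure_le s (S.comap (LinearMap.mulLeft ℂ T)) (hS.preimage hc) h hX

end AbstractClosure

section WeightedShifts

open scoped InnerProductSpace ComplexConjugate

variable {K : Type} [DecidableEq K]

/-- Bounded operators on `ℓ²(ℤ × K)`. -/
abbrev BZ (K : Type) : Type := Hl (ℤ × K) →L[ℂ] Hl (ℤ × K)

/-- Weighted shift of `ℤ`-degree `a`. -/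
def IsWS (T : BZ K) (a : ℤ) (d : K → ℂ) (τ : K → K) : Prop :=
  ∀ (m : ℤ) (k : K), T (bv (m, k)) = d k • bv (m + a, τ k)

theorem IsWS.ext {S T : BZ K} {a b : ℤ} {d d' : K → ℂ} {τ τ' : K → K}
    (hS : IsWS S a d τ) (hT : IsWS T b d' τ') (hab : a = b)
    (h : ∀ k, d k = d' k ∧ (d k = 0 ∨ τ k = τ' k)) : S = T := by
  refine ext_bv ?_
  rintro ⟨m, k⟩
  subst hab
  rw [hS, hT, ← (h k).1]
  rcases (h k).2 with h | h <;> simp [h]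

theorem IsWS.mul {S T : BZ K} {a b : ℤ} {d d' : K → ℂ} {τ τ' : K → K}
    (hS : IsWS S a d τ) (hT : IsWS T b d' τ') :
    IsWS (S * T) (a + b) (fun k => d' k * d (τ' k)) (fun k => τ (τ' k)) := by
  intro m k
  rw [mul_apply_eq_comp, hT, map_smul, hS, smul_smul, add_assoc, add_comm b a]

theorem IsWS.smul {S : BZ K} {a : ℤ} {d : K → ℂ} {τ : K → K}
    (hS : IsWS S a d τ) (c : ℂ) : IsWS (c • S) a (fun k => c * d k) τ := by
  intro m k
  rw [smul_apply, hS, smul_smul]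

theorem IsWS.sub {S T : BZ K} {a : ℤ} {d d' : K → ℂ} {τ : K → K}
    (hS : IsWS S a d τ) (hT : IsWS T a d' τ) :
    IsWS (S - T) a (fun k => d k - d' k) τ := by
  intro m k
  rw [sub_apply, hS, hT, sub_smul]

theorem IsWS.pow {S : BZ K} {d : K → ℂ}
    (hS : IsWS S 0 d id) (M : ℕ) : IsWS (S ^ M) 0 (fun k => d k ^ M) id := by
  induction M with
  | zero => intro m k; simp
  | succ M ih =>
    have := ih.mul hS
    rw [← pow_succ] at this
    intro m k
    rw [this]
    simp [pow_succ, mul_comm]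

theorem IsWS.star {T : BZ K} {a : ℤ} {d d' : K → ℂ} {τ τ' : K → K} (hT : IsWS T a d τ)
    (h : ∀ k k', (if k' = τ k then conj (d k) else 0) = if k = τ' k' then d' k' else 0) :
    IsWS (star T) (-a) d' τ' := by
  intro m k'
  ext ⟨m', k⟩
  have e1 : (Star.star T (bv (m, k'))) (m', k) = ⟪T (bv (m', k)), bv (m, k')⟫_ℂ := adjoint_coord T _ _
  rw [e1, hT, inner_smul_left, inner_bv, bv_apply, lp.coeFn_smul, Pi.smul_apply, bv_apply]
  have := h k k'
  simp only [Prod.mk.injEq, smul_eq_mul, eq_comm (a := τ k), eq_comm (a := m' + a)]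
  by_cases hm : m' = m + -a
  · subst hm
    simpa [eq_comm] using this
  · have hm' : ¬ m = m' + a := by omega
    simp [hm, hm']

theorem orth_shift (a : ℤ) (k : K) :
    Orthonormal ℂ (fun m : ℤ => (bv (m + a, k) : Hl (ℤ × K))) := by
  refine bv_orthonormal.comp (fun m : ℤ => ((m + a, k) : ℤ × K)) ?_
  intro m m' h
  simpa using h

/-- `S^a ⊗ e_{k l}`. -/
def UU (a : ℤ) (k l : K) : BZ K :=
  isoOf (orth_shift a k) ∘L ContinuousLinearMap.adjoint (isoOf (orth_shift 0 l))

theorem UU_ws (a : ℤ) (k l : K) :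
    IsWS (UU a k l) a (fun l' => if l' = l then 1 else 0) (fun _ => k) := by
  intro m l'
  unfold UU
  rw [ContinuousLinearMap.comp_apply]
  by_cases h : l' = l
  · subst h
    have : (bv (m, l') : Hl (ℤ × K)) = isoOf (orth_shift 0 l') (bv m) := by
      rw [isoOf_bv]; simp
    rw [this, adjoint_isoOf, isoOf_bv]; simp
  · have : ContinuousLinearMap.adjoint (isoOf (orth_shift 0 l)) (bv (m, l') : Hl (ℤ × K)) = 0 := by
      ext i
      rw [adjoint_coord, isoOf_bv, inner_bv, bv_apply]
      simp [Ne.symm h]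
    rw [this]; simp [h]

theorem UU_star (a : ℤ) (k l : K) : star (UU a k l) = UU (-a) l k := by
  refine IsWS.ext (IsWS.star (d' := fun l' => if l' = k then 1 else 0) (τ' := fun _ => l)
    (UU_ws a k l) ?_) (UU_ws (-a) l k) rfl ?_
  · intro k1 k2
    by_cases h1 : k2 = k <;> by_cases h2 : k1 = l <;> simp [h1, h2]
  · intro k1; simp

theorem WS_mul_UU {T : BZ K} {a : ℤ} {d : K → ℂ} {τ : K → K} (hT : IsWS T a d τ)
    (b : ℤ) (k l : K) : T * UU b k l = d k • UU (a + b) (τ k) l := by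
  refine IsWS.ext (hT.mul (UU_ws b k l)) ((UU_ws (a + b) (τ k) l).smul (d k)) rfl ?_
  intro k'; simp [mul_comm]

theorem UU_mul (a b : ℤ) (k l k' l' : K) :
    UU a k l * UU b k' l' = if k' = l then UU (a + b) k l' else 0 := by
  rw [WS_mul_UU (UU_ws a k l)]
  split_ifs <;> simp

variable (K) in
/-- The closed span of the `S^a ⊗ e_{kl}`: the ideal `C(𝕋) ⊗ K`. -/
def Isub : Submodule ℂ (BZ K) :=
  (Submodule.span ℂ (Set.range fun p : ℤ × K × K => UU p.1 p.2.1 p.2.2)).topologicalClosure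

theorem UU_mem (a : ℤ) (k l : K) : UU a k l ∈ Isub K :=
  Submodule.le_topologicalClosure _ (Submodule.subset_span ⟨(a, k, l), rfl⟩)

theorem Isub_closed : IsClosed (Isub K : Set (BZ K)) := Submodule.isClosed_topologicalClosure _

theorem Isub_le (S : Submodule ℂ (BZ K)) (hS : IsClosed (S : Set (BZ K)))
    (h : ∀ a k l, UU a k l ∈ S) : Isub K ≤ S := by
  refine Submodule.topologicalClosure_minimal _ (Submodule.span_le.2 ?_) hS
  rintro _ ⟨p, rfl⟩
  exact h _ _ _

theorem Isub_star {X : BZ K} (hX : X ∈ Isub K) : star X ∈ Isub K := by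
  have hc : IsClosed {X : BZ K | star X ∈ Isub K} := Isub_closed.preimage continuous_star
  let S : Submodule ℂ (BZ K) :=
    { carrier := {X | star X ∈ Isub K}
      add_mem' := fun {a b} ha hb => by
        change star (a + b) ∈ Isub K
        rw [star_add]; exact add_mem ha hb
      zero_mem' := by change star 0 ∈ Isub K; rw [star_zero]; exact zero_mem _
      smul_mem' := fun c a ha => by
        change star (c • a) ∈ Isub K
        rw [star_smul]; exact Submodule.smul_mem _ _ ha }
  refine Isub_le S hc (fun a k l => ?_) hX
  change star (UU a k l) ∈ Isub K
  rw [UU_star]; exact UU_mem _ _ _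

theorem Isub_left_of {T : BZ K} (h : ∀ a k l, T * UU a k l ∈ Isub K) {X : BZ K}
    (hX : X ∈ Isub K) : T * X ∈ Isub K := by
  refine abs_closure_left _ _ Isub_closed T ?_ hX
  rintro _ ⟨p, rfl⟩
  exact h _ _ _

theorem Isub_right_of {T : BZ K} (h : ∀ a k l, UU a k l * T ∈ Isub K) {X : BZ K}
    (hX : X ∈ Isub K) : X * T ∈ Isub K := by
  refine abs_closure_right _ _ Isub_closed T ?_ hX
  rintro _ ⟨p, rfl⟩
  exact h _ _ _

/-- Multipliers of the ideal. -/
def IsMult (T : BZ K) : Prop := ∀ X ∈ Isub K, T * X ∈ Isub K ∧ X * T ∈ Isub K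

theorem Isub_mul {X Y : BZ K} (hX : X ∈ Isub K) (hY : Y ∈ Isub K) : X * Y ∈ Isub K := by
  refine Isub_right_of (fun a k l => ?_) hX
  refine Isub_left_of (fun b k' l' => ?_) hY
  rw [UU_mul]
  split_ifs
  · exact UU_mem _ _ _
  · exact zero_mem _

theorem isMult_of_mem {X : BZ K} (hX : X ∈ Isub K) : IsMult X :=
  fun _ hY => ⟨Isub_mul hX hY, Isub_mul hY hX⟩

theorem IsMult.star {T : BZ K} (h : IsMult T) : IsMult (star T) := by
  intro X hX
  have := h _ (Isub_star hX)
  constructor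
  · have := Isub_star this.2; simpa using this
  · have := Isub_star this.1; simpa using this

theorem IsMult.mul {S T : BZ K} (h : IsMult S) (h' : IsMult T) : IsMult (S * T) := by
  intro X hX
  constructor
  · rw [mul_assoc]; exact (h _ (h' _ hX).1).1
  · rw [← mul_assoc]; exact (h' _ (h _ hX).2).2

theorem IsMult.sub {S T : BZ K} (h : IsMult S) (h' : IsMult T) : IsMult (S - T) := by
  intro X hX
  constructor
  · rw [sub_mul]; exact sub_mem (h _ hX).1 (h' _ hX).1
  · rw [mul_sub]; exact sub_mem (h _ hX).2 (h' _ hX).2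

theorem isMult_one : IsMult (1 : BZ K) := by
  intro X hX; simpa using hX

theorem isMult_of_ws {T : BZ K} {a a' : ℤ} {d d' : K → ℂ} {τ τ' : K → K} (h : IsWS T a d τ)
    (h' : IsWS (star T) a' d' τ') : IsMult T := by
  have key : ∀ {T : BZ K} {a : ℤ} {d : K → ℂ} {τ : K → K}, IsWS T a d τ →
      ∀ X ∈ Isub K, T * X ∈ Isub K := by
    intro T a d τ h X hX
    refine Isub_left_of (fun b k l => ?_) hX
    rw [WS_mul_UU h]
    exact Submodule.smul_mem _ _ (UU_mem _ _ _)
  intro X hX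
  refine ⟨key h X hX, ?_⟩
  have := Isub_star (key h' _ (Isub_star hX))
  simpa using this

theorem ws_norm_le {T : BZ K} {a : ℤ} {d : K → ℂ} {τ : K → K} (h : IsWS T a d τ)
    (hτ : Function.Injective τ) {ε : ℝ} (hε : 0 ≤ ε) (hd : ∀ k, ‖d k‖ ≤ ε) : ‖T‖ ≤ ε := by
  refine norm_le_of_weights T (w := fun i : ℤ × K => bv (i.1 + a, τ i.2))
    (bv_orthonormal.comp (fun i : ℤ × K => ((i.1 + a, τ i.2) : ℤ × K)) ?_) (fun i => d i.2) hε
    (fun i => hd _) (fun i => h i.1 i.2)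
  rintro ⟨m, k⟩ ⟨m', k'⟩ h
  simp only [Prod.mk.injEq, add_left_inj] at h
  rw [h.1, hτ h.2]

theorem ws_mem_Isub {T : BZ K} {a : ℤ} {d : K → ℂ} {τ : K → K} (h : IsWS T a d τ)
    (hτ : Function.Injective τ) (hd : ∀ ε > 0, {k | ε ≤ ‖d k‖}.Finite) : T ∈ Isub K := by
  refine (Isub_closed (K := K)).closure_subset ?_
  rw [Metric.mem_closure_iff]
  intro ε hε
  have hfin := hd (ε / 2) (by positivity)
  let F := hfin.toFinset
  have hFm : ∀ k, k ∈ F ↔ ε / 2 ≤ ‖d k‖ := fun k => by simp [F]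
  refine ⟨∑ k ∈ F, d k • UU a (τ k) k, ?_, ?_⟩
  · exact Submodule.sum_mem _ fun k _ => Submodule.smul_mem _ _ (UU_mem _ _ _)
  · rw [dist_eq_norm]
    refine lt_of_le_of_lt (ws_norm_le (a := a) (d := fun k => if k ∈ F then 0 else d k) (τ := τ)
      ?_ hτ (ε := ε / 2) (by positivity) ?_) (by linarith)
    · intro m k
      rw [sub_apply, h, sum_apply]
      simp only [smul_apply, UU_ws _ _ _ m k]
      by_cases hk : k ∈ F
      · rw [Finset.sum_eq_single k]
        · simp [hk]
        · intro b _ hb; simp [Ne.symm hb]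
        · intro h; exact absurd hk h
      · rw [Finset.sum_eq_zero]
        · simp [hk]
        · intro b hb
          have : k ≠ b := fun h => hk (h ▸ hb)
          simp [this]
    · intro k
      by_cases hk : k ∈ F
      · simp [hk]; positivity
      · simp only [hk, if_false]
        rw [hFm] at hk
        linarith

end WeightedShifts


section VFamily

open scoped ComplexConjugate

/-- Index set `ℕ^N`. -/
abbrev KN (N : ℕ) : Type := Fin N → ℕ

/-- Prefix sums. -/
def pre {N : ℕ} (t : ℕ) (k : KN N) : ℤ :=
  ∑ s ∈ Finset.univ.filter (fun s : Fin N => (s : ℕ) < t), (k s : ℤ)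

/-- Total sum. -/
def tot {N : ℕ} (k : KN N) : ℤ := ∑ s, (k s : ℤ)

/-- Raise coordinate `s`. -/
def up {N : ℕ} (s : Fin N) (k : KN N) : KN N := Function.update k s (k s + 1)

/-- Lower coordinate `s`. -/
def dn {N : ℕ} (s : Fin N) (k : KN N) : KN N := Function.update k s (k s - 1)

/-- Weights of the raising operators. -/
def gu (q : ℝ) {N : ℕ} (s : Fin N) (k : KN N) : ℝ :=
  q ^ (-(pre (s : ℕ) k)) * Real.sqrt (1 - q ^ (-2 * ((k s : ℤ) + 1)))

/-- Weights of the lowering operators. -/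
def gd (q : ℝ) {N : ℕ} (s : Fin N) (k : KN N) : ℝ :=
  q ^ (-(pre (s : ℕ) k)) * Real.sqrt (1 - q ^ (-2 * (k s : ℤ)))

theorem sum_update_aux {N : ℕ} (F : Finset (Fin N)) (s : Fin N) (k : KN N) (b : ℕ) :
    ∑ i ∈ F, ((Function.update k s b i : ℕ) : ℤ) =
      ∑ i ∈ F, (k i : ℤ) + if s ∈ F then (b : ℤ) - k s else 0 := by
  have : ∀ i, ((Function.update k s b i : ℕ) : ℤ) = (k i : ℤ) + if i = s then (b : ℤ) - k s else 0 := by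
    intro i
    by_cases h : i = s
    · subst h; simp
    · simp [h]
  simp only [this, Finset.sum_add_distrib]
  simp

theorem pre_up {N : ℕ} (t : ℕ) (s : Fin N) (k : KN N) :
    pre t (up s k) = pre t k + if (s : ℕ) < t then 1 else 0 := by
  unfold pre up
  rw [sum_update_aux]; simp

theorem tot_up {N : ℕ} (s : Fin N) (k : KN N) : tot (up s k) = tot k + 1 := by
  unfold tot up
  rw [sum_update_aux]; simp

theorem pre_dn {N : ℕ} (t : ℕ) (s : Fin N) (k : KN N) (h : k s ≠ 0) :
    pre t (dn s k) = pre t k - if (s : ℕ) < t then 1 else 0 := by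
  have : ((k s - 1 : ℕ) : ℤ) = k s - 1 := by omega
  unfold pre dn
  rw [sum_update_aux, this]
  by_cases h : (s : ℕ) < t <;> simp [h]; ring

theorem tot_dn {N : ℕ} (s : Fin N) (k : KN N) (h : k s ≠ 0) : tot (dn s k) = tot k - 1 := by
  have : ((k s - 1 : ℕ) : ℤ) = k s - 1 := by omega
  unfold tot dn
  rw [sum_update_aux, this]; simp; ring

theorem up_self {N : ℕ} (s : Fin N) (k : KN N) : up s k s = k s + 1 := by simp [up]
theorem dn_self {N : ℕ} (s : Fin N) (k : KN N) : dn s k s = k s - 1 := by simp [dn]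
theorem up_ne {N : ℕ} {s t : Fin N} (h : t ≠ s) (k : KN N) : up s k t = k t := by simp [up, h]
theorem dn_ne {N : ℕ} {s t : Fin N} (h : t ≠ s) (k : KN N) : dn s k t = k t := by simp [dn, h]

theorem dn_up {N : ℕ} (s : Fin N) (k : KN N) : dn s (up s k) = k := by
  simp [up, dn]

theorem up_dn {N : ℕ} (s : Fin N) (k : KN N) (h : k s ≠ 0) : up s (dn s k) = k := by
  have : k s - 1 + 1 = k s := by omega
  simp [up, dn, this]

theorem up_injective {N : ℕ} (s : Fin N) : Function.Injective (up s) :=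
  Function.LeftInverse.injective (dn_up s)

theorem up_up_comm {N : ℕ} {s t : Fin N} (h : s ≠ t) (k : KN N) :
    up s (up t k) = up t (up s k) := by
  unfold up
  rw [Function.update_of_ne h, Function.update_of_ne h.symm, Function.update_comm h]

theorem up_dn_comm {N : ℕ} {s t : Fin N} (h : s ≠ t) (k : KN N) :
    up s (dn t k) = dn t (up s k) := by
  unfold up dn
  rw [Function.update_of_ne h, Function.update_of_ne h.symm, Function.update_comm h]

theorem gd_zero (q : ℝ) {N : ℕ} (s : Fin N) (k : KN N) (h : k s = 0) : gd q s k = 0 := by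
  simp [gd, h]

theorem gd_up (q : ℝ) {N : ℕ} (s : Fin N) (k : KN N) : gd q s (up s k) = gu q s k := by
  simp [gd, gu, pre_up, up_self]

theorem gu_dn (q : ℝ) {N : ℕ} (s : Fin N) (k : KN N) (h : k s ≠ 0) :
    gu q s (dn s k) = gd q s k := by
  rw [← gd_up, up_dn s k h]

variable {q : ℝ} {N : ℕ} {v : Fin (N + 1) → BZ (KN N)}

theorem v_zero_ws (hv : IsVFamily q v) :
    IsWS (v 0) 1 (fun k => ((q ^ (-(tot k)) : ℝ) : ℂ)) id := by
  intro m k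
  exact hv.1 m k

theorem v_succ_ws (hv : IsVFamily q v) (j : Fin N) :
    IsWS (v j.succ) 1 (fun k => ((gu q (shiftIdx j) k : ℝ) : ℂ)) (up (shiftIdx j)) := by
  intro m k
  exact hv.2 j m k

theorem v_zero_star (hv : IsVFamily q v) :
    IsWS (star (v 0)) (-1) (fun k => ((q ^ (-(tot k)) : ℝ) : ℂ)) id := by
  refine (v_zero_ws hv).star fun k k' => ?_
  rw [Complex.conj_ofReal]
  by_cases h : k = k'
  · simp [h]
  · simp [h, Ne.symm h]

theorem v_succ_star (hv : IsVFamily q v) (j : Fin N) :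
    IsWS (star (v j.succ)) (-1) (fun k => ((gd q (shiftIdx j) k : ℝ) : ℂ)) (dn (shiftIdx j)) := by
  refine (v_succ_ws hv j).star fun k k' => ?_
  rw [Complex.conj_ofReal]
  generalize shiftIdx j = s
  by_cases h : k' = up s k
  · subst h
    simp [dn_up, gd_up]
  · rw [if_neg h]
    by_cases h2 : k = dn s k'
    · rw [if_pos h2]
      have : k' s = 0 := by
        by_contra h0
        exact h (by rw [h2, up_dn s k' h0])
      simp [gd_zero q s k' this]
    · rw [if_neg h2]

theorem v_zero_mult (hv : IsVFamily q v) : IsMult (v 0) :=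
  isMult_of_ws (v_zero_ws hv) (v_zero_star hv)

theorem v_succ_mult (hv : IsVFamily q v) (j : Fin N) : IsMult (v j.succ) :=
  isMult_of_ws (v_succ_ws hv j) (v_succ_star hv j)

theorem tot_nonneg (k : KN N) : 0 ≤ tot k := Finset.sum_nonneg fun _ _ => by positivity

theorem finite_weights (hq : 1 < q) {ε : ℝ} (hε : 0 < ε) {d : KN N → ℂ}
    (hd : ∀ k, ‖d k‖ ≤ q ^ (-(tot k))) : {k | ε ≤ ‖d k‖}.Finite := by
  obtain ⟨M, hM⟩ := exists_pow_lt_of_lt_one hε (inv_lt_one_of_one_lt₀ hq)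
  refine Set.Finite.subset (Set.finite_Iic (fun _ : Fin N => M)) ?_
  intro k hk
  have hk : ε ≤ ‖d k‖ := hk
  intro s
  by_contra hs
  have hs : M < k s := not_le.1 hs
  have h1 : (M : ℤ) ≤ tot k := by
    have : (k s : ℤ) ≤ tot k :=
      Finset.single_le_sum (f := fun s => (k s : ℤ)) (fun _ _ => by positivity) (Finset.mem_univ s)
    omega
  have h2 : q ^ (-(tot k)) ≤ q ^ (-(M : ℤ)) := zpow_le_zpow_right₀ hq.le (by omega)
  have h3 : q ^ (-(M : ℤ)) = q⁻¹ ^ M := by simp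
  linarith [hd k]

theorem v_zero_mem (hq : 1 < q) (hv : IsVFamily q v) : v 0 ∈ Isub (KN N) := by
  refine ws_mem_Isub (v_zero_ws hv) Function.injective_id fun ε hε => finite_weights hq hε fun k => ?_
  rw [Complex.norm_real, Real.norm_of_nonneg]
  have : 0 < q := by linarith
  positivity

theorem zpow_neg_add_one (hq : q ≠ 0) (a : ℤ) : q ^ (-(a + 1)) = q⁻¹ * q ^ (-a) := by
  rw [neg_add, zpow_add₀ hq, zpow_neg_one, mul_comm]

theorem zpow_neg_sub_one (hq : q ≠ 0) (a : ℤ) : q ^ (-(a - 1)) = q * q ^ (-a) := by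
  rw [neg_sub, sub_eq_add_neg, zpow_add₀ hq, zpow_one]

theorem comm_zero_succ (hq : q ≠ 0) (hv : IsVFamily q v) (j : Fin N) :
    v 0 * v j.succ = ((q⁻¹ : ℝ) : ℂ) • (v j.succ * v 0) := by
  refine ((v_zero_ws hv).mul (v_succ_ws hv j)).ext
    (((v_succ_ws hv j).mul (v_zero_ws hv)).smul _) rfl fun k => ⟨?_, Or.inr rfl⟩
  simp only [id, ← Complex.ofReal_mul, tot_up, zpow_neg_add_one hq]
  congr 1; ring

theorem comm_zero_succ_star (hq : q ≠ 0) (hv : IsVFamily q v) (j : Fin N) :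
    v 0 * star (v j.succ) = ((q : ℝ) : ℂ) • (star (v j.succ) * v 0) := by
  refine ((v_zero_ws hv).mul (v_succ_star hv j)).ext
    (((v_succ_star hv j).mul (v_zero_ws hv)).smul _) rfl fun k => ⟨?_, Or.inr rfl⟩
  simp only [id, ← Complex.ofReal_mul]
  by_cases h : k (shiftIdx j) = 0
  · simp [gd_zero q _ _ h]
  · rw [tot_dn _ _ h, zpow_neg_sub_one hq]
    congr 1; ring

theorem comm_zero_zero_star (hv : IsVFamily q v) : v 0 * star (v 0) = star (v 0) * v 0 := by
  refine ((v_zero_ws hv).mul (v_zero_star hv)).ext ((v_zero_star hv).mul (v_zero_ws hv)) rfl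
    fun k => ⟨rfl, Or.inr rfl⟩

end VFamily

section VSucc

variable {q : ℝ} {n : ℕ} {v : Fin (n + 1 + 1) → BZ (KN (n + 1))}

theorem shiftIdx_zero : shiftIdx (0 : Fin (n + 1)) = Fin.last n := by
  ext; simp [shiftIdx]

theorem shiftIdx_succ (i : Fin n) : shiftIdx i.succ = (shiftIdx i).castSucc := by
  ext; simp [shiftIdx]; omega

theorem pre_castSucc (t : Fin n) (k : KN (n + 1)) :
    pre (t : ℕ) k = pre (t : ℕ) (Fin.init k : KN n) := by
  unfold pre
  rw [Finset.sum_filter, Finset.sum_filter, Fin.sum_univ_castSucc]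
  have : ¬ (n < (t : ℕ)) := by omega
  simp [this, Fin.init]

theorem pre_last (k : KN (n + 1)) : pre n k = tot (Fin.init k : KN n) := by
  unfold pre tot
  rw [Finset.sum_filter, Fin.sum_univ_castSucc]
  simp [Fin.init]

theorem tot_last (k : KN (n + 1)) : tot k = tot (Fin.init k : KN n) + k (Fin.last n) := by
  unfold tot
  rw [Fin.sum_univ_castSucc]
  simp [Fin.init]

theorem comm_one_succ (hq : q ≠ 0) (hv : IsVFamily q v) (i : Fin n) :
    v (Fin.succ 0) * v i.succ.succ = ((q⁻¹ : ℝ) : ℂ) • (v i.succ.succ * v (Fin.succ 0)) := by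
  have hne : Fin.last n ≠ (shiftIdx i).castSucc := (Fin.castSucc_lt_last _).ne'
  refine ((v_succ_ws hv 0).mul (v_succ_ws hv i.succ)).ext
    (((v_succ_ws hv i.succ).mul (v_succ_ws hv 0)).smul _) rfl fun k => ⟨?_, Or.inr ?_⟩
  · simp only [← Complex.ofReal_mul, shiftIdx_zero, shiftIdx_succ]
    congr 1
    unfold gu
    have h1 : ¬ n < (shiftIdx i : ℕ) := by omega
    simp only [pre_up, up_ne hne, up_ne hne.symm, Fin.val_last, Fin.val_castSucc, h1,
      Fin.is_lt, if_true, if_false, add_zero, zpow_neg_add_one hq]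
    ring
  · rw [shiftIdx_zero, shiftIdx_succ, up_up_comm hne]

theorem comm_one_succ_star (hq : q ≠ 0) (hv : IsVFamily q v) (i : Fin n) :
    v (Fin.succ 0) * star (v i.succ.succ) =
      ((q : ℝ) : ℂ) • (star (v i.succ.succ) * v (Fin.succ 0)) := by
  have hne : Fin.last n ≠ (shiftIdx i).castSucc := (Fin.castSucc_lt_last _).ne'
  refine ((v_succ_ws hv 0).mul (v_succ_star hv i.succ)).ext
    (((v_succ_star hv i.succ).mul (v_succ_ws hv 0)).smul _) rfl fun k => ⟨?_, Or.inr ?_⟩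
  · simp only [← Complex.ofReal_mul, shiftIdx_zero, shiftIdx_succ]
    congr 1
    by_cases h : k (shiftIdx i).castSucc = 0
    · rw [gd_zero q _ _ h, gd_zero q _ (up (Fin.last n) k) (by rw [up_ne hne.symm, h])]; simp
    unfold gu gd
    have h1 : ¬ n < (shiftIdx i : ℕ) := by omega
    simp only [pre_up, pre_dn _ _ _ h, dn_ne hne, up_ne hne.symm, Fin.val_last, Fin.val_castSucc, h1,
      Fin.is_lt, if_true, if_false, add_zero, zpow_neg_sub_one hq]
    ring
  · rw [shiftIdx_zero, shiftIdx_succ, up_dn_comm hne]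

theorem comm_one_one_star (hq : 1 < q) (hv : IsVFamily q v) :
    v (Fin.succ 0) * star (v (Fin.succ 0)) =
      star (v (Fin.succ 0)) * v (Fin.succ 0) -
        ((1 - q⁻¹ ^ 2 : ℝ) : ℂ) • (star (v 0) * v 0) := by
  have hq0 : q ≠ 0 := by positivity
  have h1 : IsWS (v (Fin.succ 0) * star (v (Fin.succ 0))) 0
      (fun k => ((gd q (Fin.last n) k ^ 2 : ℝ) : ℂ)) id := by
    have := (v_succ_ws hv 0).mul (v_succ_star hv 0)
    rw [shiftIdx_zero] at this
    intro m k
    rw [this]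
    by_cases h : k (Fin.last n) = 0
    · simp [gd_zero q _ _ h]
    · beta_reduce
      rw [up_dn _ _ h, gu_dn _ _ _ h]
      simp [sq]
  have h2 : IsWS (star (v (Fin.succ 0)) * v (Fin.succ 0)) 0
      (fun k => ((gu q (Fin.last n) k ^ 2 : ℝ) : ℂ)) id := by
    have := (v_succ_star hv 0).mul (v_succ_ws hv 0)
    rw [shiftIdx_zero] at this
    intro m k
    rw [this]
    beta_reduce
    rw [dn_up, gd_up]
    simp [sq]
  have h3 : IsWS (star (v 0) * v 0) 0 (fun k => (((q ^ (-(tot k))) ^ 2 : ℝ) : ℂ)) id := by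
    have := (v_zero_star hv).mul (v_zero_ws hv)
    intro m k
    rw [this]
    simp [sq]
  refine h1.ext (h2.sub (h3.smul _)) rfl fun k => ⟨?_, Or.inr rfl⟩
  rw [← Complex.ofReal_mul, ← Complex.ofReal_sub]
  congr 1
  have p1 : q ^ (-2 * (k (Fin.last n) : ℤ)) ≤ 1 := zpow_le_one_of_nonpos₀ hq.le (by omega)
  have p2 : q ^ (-2 * ((k (Fin.last n) : ℤ) + 1)) ≤ 1 := zpow_le_one_of_nonpos₀ hq.le (by omega)
  unfold gu gd
  rw [mul_pow, mul_pow, Real.sq_sqrt (by linarith), Real.sq_sqrt (by linarith), Fin.val_last,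
    pre_last, tot_last, neg_add, zpow_add₀ hq0]
  have e1 : q ^ (-2 * (k (Fin.last n) : ℤ)) = (q ^ (-(k (Fin.last n) : ℤ))) ^ 2 := by
    rw [← zpow_natCast, ← zpow_mul]; congr 1; push_cast; ring
  have e2 : q ^ (-2 * ((k (Fin.last n) : ℤ) + 1)) = (q ^ (-(k (Fin.last n) : ℤ))) ^ 2 * q⁻¹ ^ 2 := by
    rw [← e1, mul_add, zpow_add₀ hq0]
    congr 1
    simp [zpow_ofNat]
  rw [e1, e2]
  ring

end VSucc


section Amplification

open scoped InnerProductSpace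

variable {E : Type} [NormedAddCommGroup E] [InnerProductSpace ℂ E]

/-- `ℓ²(ℤ) ⊗ E`. -/
abbrev HZE (E : Type) [NormedAddCommGroup E] : Type := lp (fun _ : ℤ => E) 2

theorem amp_mem (T : E →L[ℂ] E) (x : HZE E) : Memℓp (fun c : ℤ => T (x c)) 2 := by
  refine Memℓp.mono' (lp.memℓp (((‖T‖ : ℝ) : ℂ) • x)) fun c => ?_
  rw [lp.coeFn_smul, Pi.smul_apply, norm_smul, Complex.norm_real, norm_norm]
  exact T.le_opNorm _

/-- The amplification `1 ⊗ T`. -/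
def amp (T : E →L[ℂ] E) : HZE E →L[ℂ] HZE E :=
  LinearMap.mkContinuous
    { toFun := fun x => ⟨fun c => T (x c), amp_mem T x⟩
      map_add' := fun x y => by ext c; exact map_add T _ _
      map_smul' := fun a x => by ext c; exact map_smul T _ _ } ‖T‖ fun x => by
    have h : ‖(⟨fun c => T (x c), amp_mem T x⟩ : HZE E)‖ ≤ ‖((‖T‖ : ℝ) : ℂ) • x‖ := by
      refine lp.norm_mono (by simp) fun c => ?_
      rw [lp.coeFn_smul, Pi.smul_apply, norm_smul, Complex.norm_real, norm_norm]
      exact T.le_opNorm _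
    rwa [norm_smul, Complex.norm_real, norm_norm] at h

theorem amp_apply (T : E →L[ℂ] E) (x : HZE E) (c : ℤ) : (amp T x) c = T (x c) := rfl

theorem amp_norm (T : E →L[ℂ] E) : ‖amp T‖ ≤ ‖T‖ :=
  LinearMap.mkContinuous_norm_le _ (norm_nonneg _) _

theorem amp_single (T : E →L[ℂ] E) (c : ℤ) (x : E) :
    amp T (lp.single 2 c x : HZE E) = lp.single 2 c (T x) := by
  ext1; funext c'
  rw [amp_apply]
  by_cases h : c' = c
  · subst h; simp
  · rw [lp.single_apply_ne _ _ _ h, lp.single_apply_ne _ _ _ h, map_zero]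

theorem amp_add (S T : E →L[ℂ] E) : amp (S + T) = amp S + amp T := by
  ext1 x; ext1; funext c; rfl

theorem amp_smul (a : ℂ) (T : E →L[ℂ] E) : amp (a • T) = a • amp T := by
  ext1 x; ext1; funext c; rfl

theorem amp_mul (S T : E →L[ℂ] E) : amp (S * T) = amp S * amp T := by
  ext1 x; ext1; funext c; rfl

theorem amp_star [CompleteSpace E] (T : E →L[ℂ] E) : amp (star T) = star (amp T) := by
  refine (ContinuousLinearMap.eq_adjoint_iff _ _).2 fun x y => ?_
  rw [lp.inner_eq_tsum, lp.inner_eq_tsum]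
  refine tsum_congr fun c => ?_
  rw [amp_apply, amp_apply]
  exact ContinuousLinearMap.adjoint_inner_left T _ _

variable {ι : Type} [DecidableEq ι] [CompleteSpace E] {w : ι → HZE E} (hw : Orthonormal ℂ w)

/-- Compression of the amplification along an isometry. -/
def sec : (E →L[ℂ] E) →L[ℂ] (Hl ι →L[ℂ] Hl ι) :=
  LinearMap.mkContinuous
    { toFun := fun T => ContinuousLinearMap.adjoint (isoOf hw) ∘L amp T ∘L isoOf hw
      map_add' := fun S T => by
        rw [amp_add]; ext1 x; exact (ContinuousLinearMap.adjoint (isoOf hw)).map_add _ _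
      map_smul' := fun a T => by
        rw [amp_smul]; ext1 x; exact (ContinuousLinearMap.adjoint (isoOf hw)).map_smul _ _ } 1 fun T => by
    have h1 : ‖isoOf hw‖ ≤ 1 :=
      ContinuousLinearMap.opNorm_le_bound _ zero_le_one fun x => by rw [isoOf_norm, one_mul]
    have h2 : ‖ContinuousLinearMap.adjoint (isoOf hw)‖ ≤ 1 := by
      rw [LinearIsometryEquiv.norm_map]; exact h1
    rw [one_mul]
    calc ‖ContinuousLinearMap.adjoint (isoOf hw) ∘L amp T ∘L isoOf hw‖
        ≤ ‖ContinuousLinearMap.adjoint (isoOf hw)‖ * (‖amp T‖ * ‖isoOf hw‖) :=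
          (ContinuousLinearMap.opNorm_comp_le _ _).trans
            (mul_le_mul_of_nonneg_left (ContinuousLinearMap.opNorm_comp_le _ _) (norm_nonneg _))
      _ ≤ 1 * (‖T‖ * 1) := by
          gcongr; exact amp_norm T
      _ = ‖T‖ := by ring

theorem sec_apply (T : E →L[ℂ] E) (x : Hl ι) :
    sec hw T x = ContinuousLinearMap.adjoint (isoOf hw) (amp T (isoOf hw x)) := rfl

theorem sec_star (T : E →L[ℂ] E) : sec hw (star T) = star (sec hw T) := by
  refine (ContinuousLinearMap.eq_adjoint_iff _ _).2 fun x y => ?_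
  rw [sec_apply, sec_apply, ContinuousLinearMap.adjoint_inner_left,
    ContinuousLinearMap.adjoint_inner_right, amp_star]
  exact ContinuousLinearMap.adjoint_inner_left (amp T) _ _

/-- `g` preserves the range of the isometry. -/
def RG (g : E →L[ℂ] E) : Prop :=
  ∀ x : Hl ι, isoOf hw (sec hw g x) = amp g (isoOf hw x)

theorem RG_of {g : E →L[ℂ] E} (h : ∀ i, ∃ y, amp g (w i) = isoOf hw y) : RG hw g := by
  intro x
  have : isoOf hw ∘L sec hw g = amp g ∘L isoOf hw := by
    refine ext_bv fun i => ?_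
    obtain ⟨y, hy⟩ := h i
    rw [ContinuousLinearMap.comp_apply, ContinuousLinearMap.comp_apply, sec_apply, isoOf_bv, hy,
      adjoint_isoOf]
  exact DFunLike.congr_fun this x

theorem sec_mul_of_RG {g : E →L[ℂ] E} (hg : RG hw g) (T : E →L[ℂ] E) :
    sec hw (T * g) = sec hw T * sec hw g := by
  ext1 x
  rw [mul_apply_eq_comp, sec_apply, amp_mul, mul_apply_eq_comp, ← hg x, ← sec_apply]

theorem sec_mul_of_RG_star {g : E →L[ℂ] E} (hg : RG hw (star g)) (T : E →L[ℂ] E) :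
    sec hw (g * T) = sec hw g * sec hw T := by
  have := sec_mul_of_RG hw hg (star T)
  rw [← star_mul, sec_star, sec_star, sec_star, ← star_mul] at this
  exact star_injective this

theorem RG_zero : RG hw 0 := by
  refine RG_of hw fun i => ⟨0, ?_⟩
  rw [map_zero]; ext1; funext c; rfl

end Amplification

section SecN

open scoped InnerProductSpace

variable {n : ℕ}

/-- The position of `e_m ⊗ e_k`. -/
def pos (i : ℤ × KN (n + 1)) : ℤ := (i.2 (Fin.last n) : ℤ) - i.1 + tot (Fin.init i.2 : KN n)

theorem orthW : Orthonormal ℂ (fun i : ℤ × KN (n + 1) =>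
    (lp.single 2 (pos i) (bv (i.1, (Fin.init i.2 : KN n)) : Hl (ℤ × KN n)) : HZE (Hl (ℤ × KN n)))) := by
  rw [orthonormal_iff_ite]
  rintro ⟨m, k⟩ ⟨m', k'⟩
  rw [lp.inner_single_left]
  by_cases hp : pos (m, k) = pos (m', k')
  · rw [hp, lp.single_apply_self, inner_bv, bv_apply]
    refine if_congr ?_ rfl rfl
    simp only [Prod.mk.injEq]
    constructor
    · rintro ⟨rfl, h⟩
      refine ⟨rfl, ?_⟩
      have h2 : k (Fin.last n) = k' (Fin.last n) := by
        simp only [pos, h] at hp; omega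
      rw [← Fin.snoc_init_self k, ← Fin.snoc_init_self k', h, h2]
    · rintro ⟨rfl, rfl⟩; exact ⟨rfl, rfl⟩
  · rw [lp.single_apply_ne _ _ _ hp, inner_zero_right, if_neg]
    intro h; rw [h] at hp; exact hp rfl

/-- The linear section. -/
def sN : BZ (KN n) →L[ℂ] BZ (KN (n + 1)) := sec (orthW (n := n))

/-- Range condition. -/
abbrev RN (g : BZ (KN n)) : Prop := RG (orthW (n := n)) g

theorem amp_ws {g : BZ (KN n)} {a : ℤ} {d : KN n → ℂ} {τ : KN n → KN n} (hg : IsWS g a d τ)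
    {τ' : KN (n + 1) → KN (n + 1)}
    (h : ∀ k, d (Fin.init k) = 0 ∨ ((Fin.init (τ' k) : KN n) = τ (Fin.init k) ∧
      (τ' k (Fin.last n) : ℤ) = k (Fin.last n) + a + tot (Fin.init k : KN n) - tot (τ (Fin.init k))))
    (m : ℤ) (k : KN (n + 1)) :
    amp g (isoOf (orthW (n := n)) (bv (m, k))) =
      isoOf (orthW (n := n)) (d (Fin.init k) • bv (m + a, τ' k)) := by
  rw [map_smul, isoOf_bv, isoOf_bv, amp_single, hg]
  rcases h k with h | ⟨h1, h2⟩
  · rw [h, zero_smul, zero_smul, lp.single_zero]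
  · dsimp only
    rw [lp.single_smul, h1]
    have : pos (m + a, τ' k) = pos (m, k) := by
      simp only [pos, h1, h2]; ring
    rw [this]

theorem sN_ws {g : BZ (KN n)} {a : ℤ} {d : KN n → ℂ} {τ : KN n → KN n} (hg : IsWS g a d τ)
    {τ' : KN (n + 1) → KN (n + 1)}
    (h : ∀ k, d (Fin.init k) = 0 ∨ ((Fin.init (τ' k) : KN n) = τ (Fin.init k) ∧
      (τ' k (Fin.last n) : ℤ) = k (Fin.last n) + a + tot (Fin.init k : KN n) - tot (τ (Fin.init k)))) :
    RN g ∧ IsWS (sN g) a (fun k => d (Fin.init k)) τ' := by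
  refine ⟨RG_of _ ?_, ?_⟩
  · rintro ⟨m, k⟩
    refine ⟨_, Eq.trans ?_ (amp_ws hg h m k)⟩
    rw [isoOf_bv]
  · intro m k
    unfold sN
    rw [sec_apply, amp_ws hg h m k, adjoint_isoOf]

theorem sN_one : sN (1 : BZ (KN n)) = 1 := by
  have h1 : IsWS (1 : BZ (KN n)) 0 (fun _ => 1) id := by intro m k; simp
  have h2 : IsWS (1 : BZ (KN (n + 1))) 0 (fun _ => 1) id := by intro m k; simp
  refine (sN_ws h1 (τ' := id) fun k => Or.inr ⟨rfl, by simp⟩).2.ext h2 rfl fun k =>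
    ⟨rfl, Or.inr rfl⟩

variable {q : ℝ} {v' : Fin (n + 1) → BZ (KN n)} {v : Fin (n + 1 + 1) → BZ (KN (n + 1))}

theorem init_up_castSucc (s : Fin n) (k : KN (n + 1)) :
    (Fin.init (up s.castSucc k) : KN n) = up s (Fin.init k : KN n) := by
  unfold up
  rw [Fin.init_update_castSucc]; rfl

theorem init_dn_castSucc (s : Fin n) (k : KN (n + 1)) :
    (Fin.init (dn s.castSucc k) : KN n) = dn s (Fin.init k : KN n) := by
  unfold dn
  rw [Fin.init_update_castSucc]; rfl

theorem init_up_last (k : KN (n + 1)) :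
    (Fin.init (up (Fin.last n) k) : KN n) = (Fin.init k : KN n) := by
  unfold up
  rw [Fin.init_update_last]

theorem sN_zero (hv' : IsVFamily q v') : RN (v' 0) ∧
    IsWS (sN (v' 0)) 1 (fun k => ((q ^ (-(tot (Fin.init k : KN n))) : ℝ) : ℂ)) (up (Fin.last n)) :=
  sN_ws (v_zero_ws hv') fun k => Or.inr ⟨init_up_last k, by rw [up_self]; simp⟩

theorem sN_succ (hv' : IsVFamily q v') (j : Fin n) : RN (v' j.succ) ∧
    IsWS (sN (v' j.succ)) 1 (fun k => ((gu q (shiftIdx j) (Fin.init k : KN n) : ℝ) : ℂ))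
      (up (shiftIdx j).castSucc) :=
  sN_ws (v_succ_ws hv' j) fun k => Or.inr ⟨init_up_castSucc _ k, by
    rw [up_ne (Fin.castSucc_lt_last _).ne', tot_up]; ring⟩

theorem sN_succ_star (hv' : IsVFamily q v') (j : Fin n) : RN (star (v' j.succ)) :=
  (sN_ws (v_succ_star hv' j) (τ' := dn (shiftIdx j).castSucc) fun k => by
    by_cases h : (Fin.init k : KN n) (shiftIdx j) = 0
    · left; rw [gd_zero _ _ _ h]; rfl
    · right
      refine ⟨init_dn_castSucc _ k, ?_⟩
      rw [dn_ne (Fin.castSucc_lt_last _).ne', tot_dn _ _ h]; ring).1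

theorem sN_v_succ (hv : IsVFamily q v) (hv' : IsVFamily q v') (i : Fin n) :
    sN (v' i.succ) = v i.succ.succ := by
  refine (sN_succ hv' i).2.ext (v_succ_ws hv i.succ) rfl fun k => ⟨?_, Or.inr ?_⟩
  · rw [shiftIdx_succ]
    congr 1
    unfold gu
    rw [Fin.val_castSucc, pre_castSucc]; rfl
  · rw [shiftIdx_succ]

theorem sN_v_zero (hq : 1 < q) (hv : IsVFamily q v) (hv' : IsVFamily q v') :
    v (Fin.succ 0) - sN (v' 0) ∈ Isub (KN (n + 1)) := by
  have h1 := v_succ_ws hv 0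
  rw [shiftIdx_zero] at h1
  refine ws_mem_Isub (h1.sub (sN_zero hv').2) (up_injective _) fun ε hε =>
    finite_weights hq hε fun k => ?_
  have hq0 : 0 < q := by linarith
  rw [← Complex.ofReal_sub, Complex.norm_real, Real.norm_eq_abs]
  unfold gu
  rw [Fin.val_last, pre_last, tot_last, neg_add, zpow_add₀ hq0.ne', ← mul_sub_one, abs_mul,
    abs_of_pos (by positivity)]
  refine mul_le_mul_of_nonneg_left ?_ (by positivity)
  set L := k (Fin.last n)
  have p1 : q ^ (-2 * ((L : ℤ) + 1)) ≤ 1 := zpow_le_one_of_nonpos₀ hq.le (by omega)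
  have p2 : q ^ (-2 * ((L : ℤ) + 1)) ≤ q ^ (-(L : ℤ)) := zpow_le_zpow_right₀ hq.le (by omega)
  have p3 : 0 < q ^ (-2 * ((L : ℤ) + 1)) := by positivity
  have p4 : 0 ≤ 1 - q ^ (-2 * ((L : ℤ) + 1)) := by linarith
  have p5 : √(1 - q ^ (-2 * ((L : ℤ) + 1))) ≤ 1 := Real.sqrt_le_one.2 (by linarith)
  have p6 := Real.sq_sqrt p4
  rw [abs_le]
  constructor <;> nlinarith [Real.sqrt_nonneg (1 - q ^ (-2 * ((L : ℤ) + 1)))]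

end SecN


section Faithful

open scoped InnerProductSpace
open Filter Topology

/-- Operators tending to zero along a bounded sequence. -/
def nullSub {E : Type*} [NormedAddCommGroup E] [NormedSpace ℂ E] (x : ℕ → E) :
    Submodule ℂ (E →L[ℂ] E) where
  carrier := {X | Tendsto (fun c => X (x c)) atTop (𝓝 0)}
  zero_mem' := by simp
  add_mem' := by
    intro a b ha hb
    have := Tendsto.add ha hb
    rw [add_zero] at this
    exact this
  smul_mem' := by
    intro c a ha
    have := Tendsto.const_smul ha c
    rw [smul_zero] at this
    exact this

theorem nullSub_closed {E : Type*} [NormedAddCommGroup E] [NormedSpace ℂ E] (x : ℕ → E)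
    (hx : ∀ c, ‖x c‖ ≤ 1) : IsClosed (nullSub x : Set (E →L[ℂ] E)) := by
  refine isClosed_of_closure_subset fun X hX => ?_
  rw [Metric.mem_closure_iff] at hX
  change Tendsto (fun c => X (x c)) atTop (𝓝 0)
  rw [Metric.tendsto_atTop]
  intro ε hε
  obtain ⟨Y, hY, hd⟩ := hX (ε / 2) (by positivity)
  have hY : Tendsto (fun c => Y (x c)) atTop (𝓝 0) := hY
  rw [Metric.tendsto_atTop] at hY
  obtain ⟨M, hM⟩ := hY (ε / 2) (by positivity)
  refine ⟨M, fun c hc => ?_⟩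
  have h1 := hM c hc
  rw [dist_zero_right] at h1 ⊢
  rw [dist_eq_norm] at hd
  have h2 : ‖(X - Y) (x c)‖ ≤ ‖X - Y‖ * 1 :=
    (ContinuousLinearMap.le_opNorm _ _).trans (mul_le_mul_of_nonneg_left (hx c) (norm_nonneg _))
  have h3 : X (x c) = (X - Y) (x c) + Y (x c) := by rw [sub_apply]; abel
  rw [h3]
  refine (norm_add_le _ _).trans_lt ?_
  linarith

theorem Isub_null {K : Type} [DecidableEq K] {X : BZ K} (hX : X ∈ Isub K) (m : ℤ) (κ : ℕ → K)
    (hκ : Function.Injective κ) :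
    Tendsto (fun c => X (bv (m, κ c))) atTop (𝓝 0) := by
  refine Isub_le (nullSub fun c => bv (m, κ c)) (nullSub_closed _ fun c => ?_) (fun a k l => ?_) hX
  · exact (bv_orthonormal.1 _).le
  · change Tendsto (fun c => UU a k l (bv (m, κ c))) atTop (𝓝 0)
    have h : ∀ᶠ c in cofinite, κ c ≠ l := by
      have : {c | κ c = l}.Finite := Set.Subsingleton.finite fun a ha b hb => hκ (ha.trans hb.symm)
      simpa using this
    rw [Nat.cofinite_eq_atTop] at h
    refine tendsto_const_nhds.congr' ?_
    filter_upwards [h] with c hc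
    rw [UU_ws]; simp [hc]

variable {n : ℕ}

theorem sN_coord (T : BZ (KN n)) (m : ℤ) (k : KN n) (c : ℕ) (m' : ℤ) (l : KN n) (L : ℕ)
    (h : (L : ℤ) - m' + tot l = c - m + tot k) :
    (sN T (bv (m, (Fin.snoc k c : KN (n + 1))))) (m', (Fin.snoc l L : KN (n + 1))) =
      (T (bv (m, k))) (m', l) := by
  unfold sN
  rw [sec_apply, adjoint_coord, isoOf_bv, isoOf_bv, amp_single]
  have : pos (m', (Fin.snoc l L : KN (n + 1))) = pos (m, (Fin.snoc k c : KN (n + 1))) := by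
    simp [pos, h]
  rw [this, lp.inner_single_left, lp.single_apply_self, inner_bv]
  simp

theorem sN_faithful {T : BZ (KN n)} (h : sN T ∈ Isub (KN (n + 1))) : T = 0 := by
  refine ext_bv ?_
  rintro ⟨m, k⟩
  ext ⟨m', l⟩
  have hnull := Isub_null h m (fun c : ℕ => (Fin.snoc k c : KN (n + 1))) (by
    intro a b hab
    have := congrFun hab (Fin.last n)
    simpa using this)
  have h2 : Tendsto (fun _ : ℕ => ‖(T (bv (m, k))) (m', l)‖) atTop (𝓝 0) := by
    refine squeeze_zero' (Eventually.of_forall fun _ => norm_nonneg _) ?_ (tendsto_zero_iff_norm_tendsto_zero.1 hnull)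
    filter_upwards [eventually_ge_atTop (m - m' + tot l - tot k).toNat] with c hc
    rw [← sN_coord T m k c m' l (c - m + tot k + m' - tot l).toNat (by
      rw [Int.toNat_of_nonneg (by omega)]; ring)]
    exact lp.norm_apply_le_norm (by simp) _ _
  have h3 := tendsto_nhds_unique tendsto_const_nhds h2
  rw [norm_eq_zero] at h3
  rw [h3]; rfl

end Faithful


section IdealGen

open Filter Topology

variable {q : ℝ} {N : ℕ} {v : Fin (N + 1) → BZ (KN N)}

theorem gu_ne_zero (hq : 1 < q) (s : Fin N) (k : KN N) : gu q s k ≠ 0 := by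
  have hq0 : 0 < q := by linarith
  unfold gu
  refine mul_ne_zero (by positivity) (Real.sqrt_ne_zero'.2 ?_)
  have : q ^ (-2 * ((k s : ℤ) + 1)) < 1 := zpow_lt_one_of_neg₀ hq (by omega)
  linarith

theorem tot_eq_zero {k : KN N} (h : tot k ≤ 0) : k = 0 := by
  funext s
  have : (k s : ℤ) ≤ tot k :=
    Finset.single_le_sum (f := fun s => (k s : ℤ)) (fun _ _ => by positivity) (Finset.mem_univ s)
  have h2 : k s = 0 := by omega
  exact h2

theorem tot_zero : tot (0 : KN N) = 0 := by simp [tot]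

theorem pow_tendsto_UU (hq : 1 < q) (hv : IsVFamily q v) :
    Tendsto (fun M : ℕ => (star (v 0) * v 0) ^ (M + 1)) atTop (𝓝 (UU 0 0 0 : BZ (KN N))) := by
  have hq0 : 0 < q := by linarith
  have h3 : IsWS (star (v 0) * v 0) 0 (fun k => (((q ^ (-(tot k))) ^ 2 : ℝ) : ℂ)) id := by
    have := (v_zero_star hv).mul (v_zero_ws hv)
    intro m k
    rw [this]
    simp [sq]
  have h4 : IsWS (UU 0 0 0 : BZ (KN N)) 0 (fun k => if k = 0 then 1 else 0) id := by
    intro m k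
    rw [UU_ws]
    by_cases h : k = 0 <;> simp [h]
  rw [tendsto_iff_norm_sub_tendsto_zero]
  have hr : Tendsto (fun M : ℕ => q⁻¹ ^ M) atTop (𝓝 0) :=
    tendsto_pow_atTop_nhds_zero_of_lt_one (by positivity) (inv_lt_one_of_one_lt₀ hq)
  refine squeeze_zero (fun _ => norm_nonneg _) (fun M => ?_) hr
  refine ws_norm_le ((h3.pow (M + 1)).sub h4) Function.injective_id (by positivity) fun k => ?_
  by_cases h : k = 0
  · subst h
    simp only [tot_zero, if_true]
    simp only [neg_zero, zpow_zero, one_pow, Complex.ofReal_one, sub_self, norm_zero]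
    positivity
  · rw [if_neg h, sub_zero, ← Complex.ofReal_pow, Complex.norm_real, Real.norm_of_nonneg (by positivity)]
    have h1 : 1 ≤ tot k := by
      by_contra h'
      exact h (tot_eq_zero (by omega))
    have h2 : q ^ (-(tot k)) ≤ q⁻¹ := by
      rw [← zpow_neg_one]; exact zpow_le_zpow_right₀ hq.le (by omega)
    have hi : q⁻¹ ≤ 1 := (inv_lt_one_of_one_lt₀ hq).le
    calc ((q ^ (-(tot k))) ^ 2) ^ (M + 1) ≤ ((q⁻¹) ^ 2) ^ (M + 1) := by gcongr
      _ = q⁻¹ ^ (2 * (M + 1)) := by rw [pow_mul]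
      _ ≤ q⁻¹ ^ M := pow_le_pow_of_le_one (by positivity) hi (by omega)

theorem shiftIdx_shiftIdx (s : Fin N) : shiftIdx (shiftIdx s) = s := by
  ext; simp only [shiftIdx]; omega

theorem UU_mem_J (hq : 1 < q) (hv : IsVFamily q v) (J : Submodule ℂ (BZ (KN N)))
    (hJ : IsClosed (J : Set (BZ (KN N)))) (h0 : v 0 ∈ J) (hstar : ∀ x ∈ J, star x ∈ J)
    (hmul : ∀ x ∈ J, ∀ y ∈ J, x * y ∈ J)
    (hleft : ∀ j, ∀ x ∈ J, v j * x ∈ J) (a : ℤ) (k l : KN N) : UU a k l ∈ J := by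
  have e0 : (UU 0 0 0 : BZ (KN N)) ∈ J := by
    refine hJ.mem_of_tendsto (pow_tendsto_UU hq hv) (Eventually.of_forall fun M => ?_)
    induction M with
    | zero => rw [zero_add, pow_one]; exact hmul _ (hstar _ h0) _ h0
    | succ M ih => rw [pow_succ]; exact hmul _ ih _ (hmul _ (hstar _ h0) _ h0)
  have e1 : ∀ a : ℕ, (UU a 0 0 : BZ (KN N)) ∈ J := by
    intro a
    induction a with
    | zero => exact e0
    | succ a ih =>
      have := hleft 0 _ ih
      rw [WS_mul_UU (v_zero_ws hv)] at this
      simp only [tot_zero, neg_zero, zpow_zero, Complex.ofReal_one, one_smul, id] at this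
      rw [Nat.cast_succ, add_comm]; exact this
  have e2 : ∀ a : ℤ, (UU a 0 0 : BZ (KN N)) ∈ J := by
    intro a
    obtain ⟨b, rfl | rfl⟩ := a.eq_nat_or_neg
    · exact e1 b
    · rw [← UU_star]; exact hstar _ (e1 b)
  have e3 : ∀ (M : ℕ) (k : KN N), tot k = M → ∀ a : ℤ, (UU a k 0 : BZ (KN N)) ∈ J := by
    intro M
    induction M with
    | zero =>
      intro k hk a
      rw [tot_eq_zero (k := k) (by rw [hk]; simp)]; exact e2 a
    | succ M ih =>
      intro k hk a
      have : ∃ s, k s ≠ 0 := by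
        by_contra hcon
        push Not at hcon
        have : k = 0 := funext hcon
        rw [this, tot_zero] at hk
        omega
      obtain ⟨s, hs⟩ := this
      have h1 := ih (dn s k) (by rw [tot_dn _ _ hs, hk]; push_cast; ring) (a - 1)
      have h2 := hleft (shiftIdx s).succ _ h1
      rw [WS_mul_UU (v_succ_ws hv _), shiftIdx_shiftIdx, up_dn _ _ hs, add_sub_cancel] at h2
      exact (Submodule.smul_mem_iff _ (by exact_mod_cast gu_ne_zero hq s _)).1 h2
  have e4 : ∀ (k : KN N) (a : ℤ), (UU a k 0 : BZ (KN N)) ∈ J := fun k =>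
    e3 (tot k).toNat k (by rw [Int.toNat_of_nonneg (tot_nonneg k)])
  have e5 := hmul _ (e4 k a) _ (hstar _ (e4 l 0))
  rw [UU_star, UU_mul, if_pos rfl, neg_zero, add_zero] at e5
  exact e5

end IdealGen

section Words

variable {q : ℝ} {n : ℕ} {v' : Fin (n + 1) → BZ (KN n)} {v : Fin (n + 1 + 1) → BZ (KN (n + 1))}

/-- Invariant satisfied by words in the generators. -/
def Good (v : Fin (n + 1 + 1) → BZ (KN (n + 1))) (v' : Fin (n + 1) → BZ (KN n))
    (T : BZ (KN (n + 1))) (T' : BZ (KN n)) : Prop :=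
  T - sN T' ∈ Isub (KN (n + 1)) ∧ IsMult T ∧
    ∃ c : ℂ, v (Fin.succ 0) * T - c • (T * v (Fin.succ 0)) ∈ Isub (KN (n + 1)) ∧
      v' 0 * T' = c • (T' * v' 0)

theorem good_one : Good v v' 1 1 := by
  refine ⟨?_, isMult_one, 1, ?_, ?_⟩
  · rw [sN_one, sub_self]; exact zero_mem _
  · rw [mul_one, one_mul, one_smul, sub_self]; exact zero_mem _
  · rw [mul_one, one_mul, one_smul]

theorem good_comm {g T : BZ (KN (n + 1))} {g' T' : BZ (KN n)} (hg : Good v v' g g')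
    (hT : Good v v' T T') :
    ∃ c : ℂ, v (Fin.succ 0) * (g * T) - c • (g * T * v (Fin.succ 0)) ∈ Isub (KN (n + 1)) ∧
      v' 0 * (g' * T') = c • (g' * T' * v' 0) := by
  obtain ⟨-, mg, c, hc, hc'⟩ := hg
  obtain ⟨-, mT, d, hd, hd'⟩ := hT
  refine ⟨c * d, ?_, ?_⟩
  · have : v (Fin.succ 0) * (g * T) - (c * d) • (g * T * v (Fin.succ 0)) =
      (v (Fin.succ 0) * g - c • (g * v (Fin.succ 0))) * T +
        c • (g * (v (Fin.succ 0) * T - d • (T * v (Fin.succ 0)))) := by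
      simp only [sub_mul, mul_sub, smul_sub, smul_mul_assoc, mul_smul_comm, smul_smul, mul_assoc]
      abel
    rw [this]
    exact add_mem (mT _ hc).2 (Submodule.smul_mem _ _ (mg _ hd).1)
  · rw [← mul_assoc, hc', smul_mul_assoc, mul_assoc, hd', mul_smul_comm, smul_smul, mul_assoc]

theorem sN_mult {T : BZ (KN (n + 1))} {T' : BZ (KN n)} (h : T - sN T' ∈ Isub (KN (n + 1)))
    (hT : IsMult T) : IsMult (sN T') := by
  have := hT.sub (isMult_of_mem h)
  rwa [sub_sub_cancel] at this

theorem good_left {g T : BZ (KN (n + 1))} {g' T' : BZ (KN n)} (hg : Good v v' g g')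
    (hr : RN (star g')) (hT : Good v v' T T') : Good v v' (g * T) (g' * T') := by
  refine ⟨?_, hg.2.1.mul hT.2.1, good_comm hg hT⟩
  have e : sN (g' * T') = sN g' * sN T' := sec_mul_of_RG_star _ hr T'
  have : g * T - sN (g' * T') = (g - sN g') * T + sN g' * (T - sN T') := by
    rw [e, sub_mul, mul_sub]; abel
  rw [this]
  exact add_mem (hT.2.1 _ hg.1).2 ((sN_mult hg.1 hg.2.1) _ hT.1).1

theorem good_v1 (hq : 1 < q) (hv : IsVFamily q v) (hv' : IsVFamily q v') :
    Good v v' (v (Fin.succ 0)) (v' 0) :=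
  ⟨sN_v_zero hq hv hv', v_succ_mult hv 0, 1, by
    rw [one_smul, sub_self]; exact zero_mem _, by rw [one_smul]⟩

theorem good_left_one (hq : 1 < q) (hv : IsVFamily q v) (hv' : IsVFamily q v')
    {T : BZ (KN (n + 1))} {T' : BZ (KN n)} (hT : Good v v' T T') :
    Good v v' (v (Fin.succ 0) * T) (v' 0 * T') := by
  have hg := good_v1 hq hv hv'
  refine ⟨?_, hg.2.1.mul hT.2.1, good_comm hg hT⟩
  obtain ⟨h1, mT, c, hc, hc'⟩ := hT
  have e : sN (T' * v' 0) = sN T' * sN (v' 0) := sec_mul_of_RG _ (sN_zero hv').1 T'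
  have : v (Fin.succ 0) * T - sN (v' 0 * T') =
      (v (Fin.succ 0) * T - c • (T * v (Fin.succ 0))) +
        c • (T * (v (Fin.succ 0) - sN (v' 0)) + (T - sN T') * sN (v' 0)) := by
    rw [hc', map_smul, e]
    simp only [sub_mul, mul_sub, smul_sub, smul_add]
    abel
  rw [this]
  exact add_mem hc (Submodule.smul_mem _ _
    (add_mem (mT _ hg.1).1 (sN_mult hg.1 hg.2.1 _ h1).2))

theorem good_zero {T : BZ (KN (n + 1))} (hT : T ∈ Isub (KN (n + 1))) (h1 : IsMult (v (Fin.succ 0))) :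
    Good v v' T 0 := by
  refine ⟨by rwa [map_zero, sub_zero], isMult_of_mem hT, 0, ?_, ?_⟩
  · rw [zero_smul, sub_zero]; exact (h1 _ hT).1
  · rw [mul_zero, zero_smul]

theorem good_succ (hq : 1 < q) (hv : IsVFamily q v) (hv' : IsVFamily q v') (i : Fin n) :
    Good v v' (v i.succ.succ) (v' i.succ) := by
  have hq0 : q ≠ 0 := by positivity
  refine ⟨?_, v_succ_mult hv i.succ, ((q⁻¹ : ℝ) : ℂ), ?_, comm_zero_succ hq0 hv' i⟩
  · rw [sN_v_succ hv hv', sub_self]; exact zero_mem _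
  · rw [comm_one_succ hq0 hv, sub_self]; exact zero_mem _

theorem good_succ_star (hq : 1 < q) (hv : IsVFamily q v) (hv' : IsVFamily q v') (i : Fin n) :
    Good v v' (star (v i.succ.succ)) (star (v' i.succ)) := by
  have hq0 : q ≠ 0 := by positivity
  refine ⟨?_, (v_succ_mult hv i.succ).star, (q : ℂ), ?_, comm_zero_succ_star hq0 hv' i⟩
  · have : sN (star (v' i.succ)) = star (sN (v' i.succ)) := sec_star _ _
    rw [this, sN_v_succ hv hv', sub_self]; exact zero_mem _
  · rw [comm_one_succ_star hq0 hv, sub_self]; exact zero_mem _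

theorem good_one_star (hq : 1 < q) (hv : IsVFamily q v) (hv' : IsVFamily q v') :
    Good v v' (star (v (Fin.succ 0))) (star (v' 0)) := by
  refine ⟨?_, (v_succ_mult hv 0).star, 1, ?_, ?_⟩
  · have : sN (star (v' 0)) = star (sN (v' 0)) := sec_star _ _
    rw [this, ← star_sub]; exact Isub_star (sN_v_zero hq hv hv')
  · rw [comm_one_one_star hq hv, one_smul, sub_sub_cancel_left]
    exact neg_mem (Submodule.smul_mem _ _ ((v_zero_mult hv).star _ (v_zero_mem hq hv)).1)
  · rw [one_smul, comm_zero_zero_star hv']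

/-- The second components of the generators. -/
def genB (v' : Fin (n + 1) → BZ (KN n)) : Fin (n + 1 + 1) → BZ (KN n) := Fin.cases 0 v'

theorem good_words (hq : 1 < q) (hv : IsVFamily q v) (hv' : IsVFamily q v')
    (p : BZ (KN (n + 1)) × BZ (KN n))
    (hp : p ∈ Submonoid.closure (Set.range (fun i => (v i, genB v' i)) ∪
      star (Set.range (fun i => (v i, genB v' i))))) : Good v v' p.1 p.2 := by
  induction hp using Submonoid.closure_induction_left with
  | one => exact good_one
  | mul_left x hx y hy ih =>
    rw [Prod.fst_mul, Prod.snd_mul]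
    rcases hx with ⟨i, rfl⟩ | hx
    · induction i using Fin.cases with
      | zero =>
        have hr : RN (star (0 : BZ (KN n))) := by rw [star_zero]; exact RG_zero _
        exact good_left (good_zero (v_zero_mem hq hv) (v_succ_mult hv 0)) hr ih
      | succ j =>
        induction j using Fin.cases with
        | zero => exact good_left_one hq hv hv' ih
        | succ i => exact good_left (good_succ hq hv hv' i) (sN_succ_star hv' i) ih
    · rw [Set.mem_star] at hx
      obtain ⟨i, hi⟩ := hx
      obtain rfl : x = star (v i, genB v' i) := by
        have hi' : (v i, genB v' i) = star x := hi
        rw [hi', star_star]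
      induction i using Fin.cases with
      | zero =>
        have h : Good v v' (star (v 0)) (star 0) := by
          rw [star_zero]
          exact good_zero (Isub_star (v_zero_mem hq hv)) (v_succ_mult hv 0)
        have hr : RN (star (star (0 : BZ (KN n)))) := by rw [star_star]; exact RG_zero _
        exact good_left h hr ih
      | succ j =>
        induction j using Fin.cases with
        | zero =>
          have hr : RN (star (star (v' 0))) := by rw [star_star]; exact (sN_zero hv').1
          exact good_left (good_one_star hq hv hv') hr ih
        | succ i =>
          have hr : RN (star (star (v' i.succ))) := by rw [star_star]; exact (sN_succ hv' i).1
          exact good_left (good_succ_star hq hv hv' i) hr ih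

end Words


section AbstractExtension

variable {A B : Type} [CStarAlgebra A] [CStarAlgebra B]

theorem abs_words_mem (S : Set A) (L : A →L[ℂ] B) (I : Submodule ℂ B) (hI : IsClosed (I : Set B))
    (h : ∀ w ∈ Submonoid.closure (S ∪ star S), L w ∈ I) :
    ∀ x ∈ (StarAlgebra.adjoin ℂ S).topologicalClosure, L x ∈ I := by
  have h1 : ∀ x ∈ StarAlgebra.adjoin ℂ S, L x ∈ I := by
    intro x hx
    have hx' : x ∈ Submodule.span ℂ (Submonoid.closure (S ∪ star S) : Set A) := by
      rw [← Algebra.adjoin_eq_span, ← StarAlgebra.adjoin_toSubalgebra]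
      exact hx
    clear hx
    induction hx' using Submodule.span_induction with
    | mem x hx => exact h x hx
    | zero => rw [map_zero]; exact zero_mem _
    | add x y _ _ hx hy =>
      rw [map_add]; exact add_mem hx hy
    | smul a x _ hx => rw [map_smul]; exact Submodule.smul_mem _ _ hx
  intro x hx
  have hc : IsClosed {x | L x ∈ I} := hI.preimage L.continuous
  exact hc.closure_subset_iff.2 (fun x hx => h1 x hx) hx

theorem abs_lift (Γ : StarSubalgebra ℂ (A × B)) (hΓ : IsClosed (Γ : Set (A × B)))
    (hinj : ∀ b, ((0 : A), b) ∈ Γ → b = 0) :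
    IsClosed {a : A | ∃ b, (a, b) ∈ Γ} := by
  have : IsClosed (Γ : Set (A × B)) := hΓ
  have : CompleteSpace Γ := hΓ.completeSpace_coe
  let f : Γ →⋆ₐ[ℂ] A := (StarAlgHom.fst ℂ A B).comp Γ.subtype
  have hf : Function.Injective f := by
    rw [injective_iff_map_eq_zero]
    rintro ⟨⟨a, b⟩, h⟩ h0
    have ha : a = 0 := h0
    subst ha
    have := hinj b h
    subst this
    rfl
  have hiso : Isometry f := NonUnitalStarAlgHom.isometry (f : Γ →⋆ₙₐ[ℂ] A) hf
  have := hiso.isClosedEmbedding.isClosed_range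
  convert this using 1
  ext a
  constructor
  · rintro ⟨b, hb⟩; exact ⟨⟨(a, b), hb⟩, rfl⟩
  · rintro ⟨⟨⟨a', b⟩, hb⟩, rfl⟩; exact ⟨b, hb⟩

theorem abs_hom (Γ : StarSubalgebra ℂ (A × B)) (SA : StarSubalgebra ℂ A) (SB : StarSubalgebra ℂ B)
    (hinj : ∀ b, ((0 : A), b) ∈ Γ → b = 0) (hA : ∀ a ∈ SA, ∃ b, (a, b) ∈ Γ)
    (hB : ∀ b ∈ SB, ∃ a, (a, b) ∈ Γ) (h : ∀ p ∈ Γ, p.1 ∈ SA ∧ p.2 ∈ SB) :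
    ∃ φ : SA →⋆ₐ[ℂ] SB, Function.Surjective φ ∧ ∀ x : SA, φ x = 0 ↔ ((x : A), (0 : B)) ∈ Γ := by
  have huniq : ∀ a b b', (a, b) ∈ Γ → (a, b') ∈ Γ → b = b' := by
    intro a b b' h1 h2
    have := sub_mem h1 h2
    rw [Prod.mk_sub_mk, sub_self] at this
    exact sub_eq_zero.1 (hinj _ this)
  choose! F hF using hA
  have hF' : ∀ a b, (a, b) ∈ Γ → F a = b := fun a b hab =>
    huniq _ _ _ (hF a (h _ hab).1) hab
  let φ : SA →⋆ₐ[ℂ] SB :=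
    { toFun := fun x => ⟨F x, (h _ (hF x x.2)).2⟩
      map_one' := Subtype.ext (hF' _ _ (one_mem Γ))
      map_mul' := fun x y => Subtype.ext (hF' _ _ (mul_mem (hF x x.2) (hF y y.2)))
      map_zero' := Subtype.ext (hF' _ _ (zero_mem Γ))
      map_add' := fun x y => Subtype.ext (hF' _ _ (add_mem (hF x x.2) (hF y y.2)))
      commutes' := fun r => Subtype.ext (hF' _ _ (algebraMap_mem Γ r))
      map_star' := fun x => Subtype.ext (hF' _ _ (star_mem (hF x x.2))) }
  refine ⟨φ, ?_, ?_⟩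
  · rintro ⟨b, hb⟩
    obtain ⟨a, ha⟩ := hB b hb
    exact ⟨⟨a, (h _ ha).1⟩, Subtype.ext (hF' _ _ ha)⟩
  · intro x
    constructor
    · intro hx
      have h1 := hF x x.2
      have h2 : F x = 0 := congrArg Subtype.val hx
      rwa [h2] at h1
    · intro hx
      exact Subtype.ext (hF' _ _ hx)

theorem abs_main {ι κ : Type} (a : ι → A) (b : ι → B) (b' : κ → B)
    (hb1 : ∀ j, ∃ i, b i = b' j) (hb2 : ∀ i, b i ∈ StarAlgebra.adjoin ℂ (Set.range b'))
    (I : Submodule ℂ A) (hI : IsClosed (I : Set A)) (s : B →L[ℂ] A)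
    (hs : ∀ b, s b ∈ I → b = 0)
    (hw : ∀ p ∈ Submonoid.closure (Set.range (fun i => (a i, b i)) ∪
      star (Set.range (fun i => (a i, b i)))), p.1 - s p.2 ∈ I)
    (hIJ : ∀ J : Submodule ℂ A, IsClosed (J : Set A) → (∀ i, b i = 0 → a i ∈ J) →
      (∀ x ∈ J, star x ∈ J) → (∀ x ∈ J, ∀ y ∈ J, x * y ∈ J) → (∀ i, ∀ x ∈ J, a i * x ∈ J) → I ≤ J) :
    ∃ φ : (StarAlgebra.adjoin ℂ (Set.range a)).topologicalClosure →⋆ₐ[ℂ]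
      (StarAlgebra.adjoin ℂ (Set.range b')).topologicalClosure,
      Function.Surjective φ ∧ (∀ x, φ x = 0 ↔ (x : A) ∈ I) ∧
      ∀ x ∈ I, x ∈ (StarAlgebra.adjoin ℂ (Set.range a)).topologicalClosure := by
  let S : Set (A × B) := Set.range (fun i => (a i, b i))
  let Γ := (StarAlgebra.adjoin ℂ S).topologicalClosure
  have hΓ : IsClosed (Γ : Set (A × B)) := StarSubalgebra.isClosed_topologicalClosure _
  have hgen : ∀ i, (a i, b i) ∈ Γ := fun i =>
    StarSubalgebra.le_topologicalClosure _ (StarAlgebra.subset_adjoin ℂ S ⟨i, rfl⟩)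
  have h1 : ∀ p ∈ Γ, p.1 - s p.2 ∈ I :=
    abs_words_mem S (ContinuousLinearMap.fst ℂ A B - s ∘L ContinuousLinearMap.snd ℂ A B) I hI hw
  have hinj : ∀ b, ((0 : A), b) ∈ Γ → b = 0 := by
    intro b hb
    have := h1 _ hb
    rw [zero_sub, neg_mem_iff] at this
    exact hs b this
  have hcl := abs_lift Γ hΓ hinj
  let J : Submodule ℂ A := Γ.toSubalgebra.toSubmodule.comap (LinearMap.inl ℂ A B)
  have hJm : ∀ x, x ∈ J ↔ (x, (0 : B)) ∈ Γ := fun x => Iff.rfl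
  have hJI : ∀ x, (x, (0 : B)) ∈ Γ ↔ x ∈ I := by
    intro x
    constructor
    · intro hx
      have := h1 _ hx
      rwa [map_zero, sub_zero] at this
    · intro hx
      refine hIJ J ?_ ?_ ?_ ?_ ?_ hx
      · exact hΓ.preimage (by fun_prop : Continuous fun x : A => (x, (0 : B)))
      · intro i hi
        rw [hJm, ← hi]; exact hgen i
      · intro x hx
        rw [hJm] at hx ⊢
        have h5 : (star x, star (0 : B)) ∈ Γ := star_mem hx
        rwa [star_zero] at h5
      · intro x hx y hy
        rw [hJm] at hx hy ⊢
        have := mul_mem hx hy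
        rwa [Prod.mk_mul_mk, mul_zero] at this
      · intro i x hx
        rw [hJm] at hx ⊢
        have := mul_mem (hgen i) hx
        rwa [Prod.mk_mul_mk, mul_zero] at this
  have hA : ∀ x ∈ (StarAlgebra.adjoin ℂ (Set.range a)).topologicalClosure, ∃ b, (x, b) ∈ Γ := by
    have : StarAlgebra.adjoin ℂ (Set.range a) ≤ Γ.map (StarAlgHom.fst ℂ A B) := by
      refine StarAlgebra.adjoin_le ?_
      rintro _ ⟨i, rfl⟩
      exact ⟨_, hgen i, rfl⟩
    intro x hx
    refine hcl.closure_subset_iff.2 (fun y hy => ?_) hx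
    obtain ⟨⟨y', b⟩, hp, rfl⟩ := this hy
    exact ⟨b, hp⟩
  have hB : ∀ y ∈ (StarAlgebra.adjoin ℂ (Set.range b')).topologicalClosure, ∃ x, (x, y) ∈ Γ := by
    have : StarAlgebra.adjoin ℂ (Set.range b') ≤ Γ.map (StarAlgHom.snd ℂ A B) := by
      refine StarAlgebra.adjoin_le ?_
      rintro _ ⟨j, rfl⟩
      obtain ⟨i, hi⟩ := hb1 j
      exact ⟨_, hgen i, hi⟩
    have hc2 : IsClosed {y : B | (s y, y) ∈ Γ} :=
      hΓ.preimage (by fun_prop : Continuous fun y : B => (s y, y))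
    intro y hy
    refine ⟨s y, hc2.closure_subset_iff.2 (fun z hz => ?_) hy⟩
    obtain ⟨⟨x, z⟩, hp, rfl⟩ := this hz
    have hp : (x, z) ∈ Γ := hp
    have h3 := sub_mem hp ((hJI _).2 (h1 _ hp))
    rw [Prod.mk_sub_mk, sub_zero, sub_sub_cancel] at h3
    exact h3
  have hc : ∀ p ∈ Γ, p.1 ∈ (StarAlgebra.adjoin ℂ (Set.range a)).topologicalClosure ∧
      p.2 ∈ (StarAlgebra.adjoin ℂ (Set.range b')).topologicalClosure := by
    intro p hp
    constructor
    · have : Γ ≤ ((StarAlgebra.adjoin ℂ (Set.range a)).topologicalClosure).comap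
          (StarAlgHom.fst ℂ A B) := by
        refine StarSubalgebra.topologicalClosure_minimal (StarAlgebra.adjoin_le ?_) ?_
        · rintro _ ⟨i, rfl⟩
          exact StarSubalgebra.le_topologicalClosure _ (StarAlgebra.subset_adjoin ℂ _ ⟨i, rfl⟩)
        · exact (StarSubalgebra.isClosed_topologicalClosure _).preimage continuous_fst
      exact this hp
    · have : Γ ≤ ((StarAlgebra.adjoin ℂ (Set.range b')).topologicalClosure).comap
          (StarAlgHom.snd ℂ A B) := by
        refine StarSubalgebra.topologicalClosure_minimal (StarAlgebra.adjoin_le ?_) ?_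
        · rintro _ ⟨i, rfl⟩
          exact StarSubalgebra.le_topologicalClosure _ (hb2 i)
        · exact (StarSubalgebra.isClosed_topologicalClosure _).preimage continuous_snd
      exact this hp
  obtain ⟨φ, h2, h3⟩ := abs_hom Γ _ _ hinj hA hB hc
  exact ⟨φ, h2, fun x => (h3 x).trans (hJI x), fun x hx => (hc _ ((hJI x).2 hx)).1⟩

end AbstractExtension

section Extension

variable {q : ℝ} {n : ℕ} {v' : Fin (n + 1) → BZ (KN n)} {v : Fin (n + 1 + 1) → BZ (KN (n + 1))}

theorem main_ext (hq : 1 < q) (hv : IsVFamily q v) (hv' : IsVFamily q v') :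
    ∃ φ : sphereAlg v →⋆ₐ[ℂ] sphereAlg v',
      Function.Surjective φ ∧ (∀ x, φ x = 0 ↔ (x : BZ (KN (n + 1))) ∈ Isub (KN (n + 1))) ∧
      ∀ x ∈ Isub (KN (n + 1)), x ∈ sphereAlg v := by
  refine abs_main (A := BZ (KN (n + 1))) (B := BZ (KN n)) v (genB v') v'
    (fun j => ⟨j.succ, rfl⟩) (fun i => ?_) (Isub (KN (n + 1))) Isub_closed sN
    (fun b hb => sN_faithful hb) (fun p hp => (good_words hq hv hv' p hp).1) ?_
  · induction i using Fin.cases with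
    | zero => exact zero_mem _
    | succ j => exact StarAlgebra.subset_adjoin ℂ _ ⟨j, rfl⟩
  · intro J hJ h0 hstar hmul hleft
    exact Isub_le J hJ (UU_mem_J hq hv J hJ (h0 0 rfl) hstar hmul hleft)

end Extension


section AbstractKernel

variable {A B : Type} [CStarAlgebra A] [CStarAlgebra B]

theorem abs_nulift {C D : Type} [CStarAlgebra C] [CStarAlgebra D]
    (G : NonUnitalStarSubalgebra ℂ C) (hG : IsClosed (G : Set C)) (p : C →⋆ₙₐ[ℂ] D)
    (hinj : ∀ x ∈ G, p x = 0 → x = 0) :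
    IsClosed (p '' (G : Set C)) := by
  have : IsClosed (G : Set C) := hG
  have : CompleteSpace G := hG.completeSpace_coe
  let f : G →⋆ₙₐ[ℂ] D := p.comp (NonUnitalStarSubalgebraClass.subtype G)
  have hf : Function.Injective f := by
    rw [injective_iff_map_eq_zero]
    rintro ⟨x, h⟩ h0
    exact Subtype.ext (hinj x h h0)
  have hiso : Isometry f := NonUnitalStarAlgHom.isometry f hf
  have := hiso.isClosedEmbedding.isClosed_range
  convert this using 1
  ext a
  constructor
  · rintro ⟨b, hb, rfl⟩; exact ⟨⟨b, hb⟩, rfl⟩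
  · rintro ⟨⟨b, hb⟩, rfl⟩; exact ⟨b, hb, rfl⟩

theorem abs_span_alg {C ι : Type} [CStarAlgebra C] (s : ι → C) (hstar : ∀ i, ∃ j, star (s i) = s j)
    (hmul : ∀ i j, (∃ k, s i * s j = s k) ∨ s i * s j = 0) :
    ∃ G : NonUnitalStarSubalgebra ℂ C, IsClosed (G : Set C) ∧
      (G : Set C) = (Submodule.span ℂ (Set.range s)).topologicalClosure := by
  let S := Submodule.span ℂ (Set.range s)
  let G0 : NonUnitalStarSubalgebra ℂ C :=
    { carrier := S
      zero_mem' := zero_mem S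
      add_mem' := fun h h' => add_mem h h'
      smul_mem' := fun c x h => S.smul_mem c h
      mul_mem' := by
        intro x y hx hy
        refine Submodule.span_induction₂ (p := fun x y _ _ => x * y ∈ S) ?_ ?_ ?_ ?_ ?_ ?_ ?_ hx hy
        · rintro _ _ ⟨i, rfl⟩ ⟨j, rfl⟩
          rcases hmul i j with ⟨k, hk⟩ | h0
          · rw [hk]; exact Submodule.subset_span ⟨k, rfl⟩
          · rw [h0]; exact zero_mem _
        · intro y _; rw [zero_mul]; exact zero_mem _
        · intro y _; rw [mul_zero]; exact zero_mem _
        · intro x y z _ _ _ h h'; rw [add_mul]; exact add_mem h h'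
        · intro x y z _ _ _ h h'; rw [mul_add]; exact add_mem h h'
        · intro r x y _ _ h; rw [smul_mul_assoc]; exact S.smul_mem _ h
        · intro r x y _ _ h; rw [mul_smul_comm]; exact S.smul_mem _ h
      star_mem' := by
        intro x hx
        refine Submodule.span_induction (p := fun x _ => star x ∈ S) ?_ ?_ ?_ ?_ hx
        · rintro _ ⟨i, rfl⟩
          obtain ⟨j, hj⟩ := hstar i
          rw [hj]; exact Submodule.subset_span ⟨j, rfl⟩
        · rw [star_zero]; exact zero_mem _
        · intro x y _ _ h h'; rw [star_add]; exact add_mem h h'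
        · intro r x _ h; rw [star_smul]; exact S.smul_mem _ h }
  refine ⟨G0.topologicalClosure, G0.isClosed_topologicalClosure, ?_⟩
  rfl

theorem abs_graph {ι κ : Type} (s : ι → A) (t : ι → B)
    (hstar : ∀ i, ∃ j, star (s i) = s j ∧ star (t i) = t j)
    (hmul : ∀ i j, (∃ k, s i * s j = s k ∧ t i * t j = t k) ∨ (s i * s j = 0 ∧ t i * t j = 0))
    (L : κ → A →L[ℂ] ℂ) (M : κ → B →L[ℂ] ℂ) (hLM : ∀ k i, L k (s i) = M k (t i))
    (hL : ∀ a, (∀ k, L k a = 0) → a = 0) (hM : ∀ b, (∀ k, M k b = 0) → b = 0) :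
    ∃ G : NonUnitalStarSubalgebra ℂ (A × B),
      (∀ b, ((0 : A), b) ∈ G → b = 0) ∧ (∀ a, (a, (0 : B)) ∈ G → a = 0) ∧
      (∀ a, a ∈ (Submodule.span ℂ (Set.range s)).topologicalClosure ↔ ∃ b, (a, b) ∈ G) ∧
      (∀ b, b ∈ (Submodule.span ℂ (Set.range t)).topologicalClosure ↔ ∃ a, (a, b) ∈ G) := by
  obtain ⟨G, hG, hGS⟩ := abs_span_alg (fun i => (s i, t i))
    (by
      intro i
      obtain ⟨j, h1, h2⟩ := hstar i
      exact ⟨j, Prod.ext h1 h2⟩)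
    (by
      intro i j
      rcases hmul i j with ⟨k, h1, h2⟩ | ⟨h1, h2⟩
      · exact Or.inl ⟨k, Prod.ext h1 h2⟩
      · exact Or.inr (Prod.ext h1 h2))
  have hmem : ∀ i, (s i, t i) ∈ G := by
    intro i
    change (s i, t i) ∈ (G : Set (A × B))
    rw [hGS]
    exact subset_closure (Submodule.subset_span ⟨i, rfl⟩)
  have hmin : ∀ (S : Submodule ℂ (A × B)), IsClosed (S : Set (A × B)) →
      (∀ i, (s i, t i) ∈ S) → ∀ p ∈ G, p ∈ S := by
    intro S hS h p hp
    have hp' : p ∈ (G : Set (A × B)) := hp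
    rw [hGS] at hp'
    refine Submodule.topologicalClosure_minimal _ (Submodule.span_le.2 ?_) hS hp'
    rintro _ ⟨i, rfl⟩
    exact h i
  have hLMG : ∀ k, ∀ p ∈ G, L k p.1 = M k p.2 := by
    intro k p hp
    let D : A × B →L[ℂ] ℂ := (L k).comp (ContinuousLinearMap.fst ℂ A B) -
      (M k).comp (ContinuousLinearMap.snd ℂ A B)
    have : p ∈ LinearMap.ker D.toLinearMap := by
      refine hmin _ (isClosed_singleton.preimage D.continuous) ?_ p hp
      intro i
      exact sub_eq_zero.2 (hLM k i)
    exact sub_eq_zero.1 this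
  have h1 : ∀ b, ((0 : A), b) ∈ G → b = 0 := by
    intro b hb
    refine hM b fun k => ?_
    rw [← hLMG k _ hb, map_zero]
  have h2 : ∀ a, (a, (0 : B)) ∈ G → a = 0 := by
    intro b hb
    refine hL b fun k => ?_
    rw [hLMG k _ hb, map_zero]
  have c1 := abs_nulift G hG (NonUnitalStarAlgHom.fst ℂ A B) (by
    rintro ⟨a, b⟩ h h0
    have ha : a = 0 := h0
    subst ha
    rw [h1 b h]; rfl)
  have c2 := abs_nulift G hG (NonUnitalStarAlgHom.snd ℂ A B) (by
    rintro ⟨a, b⟩ h h0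
    have ha : b = 0 := h0
    subst ha
    rw [h2 a h]; rfl)
  refine ⟨G, h1, h2, ?_, ?_⟩
  · intro a
    constructor
    · intro ha
      let S : Submodule ℂ A :=
        { carrier := (NonUnitalStarAlgHom.fst ℂ A B) '' (G : Set (A × B))
          zero_mem' := ⟨0, zero_mem G, rfl⟩
          add_mem' := by
            rintro _ _ ⟨x, hx, rfl⟩ ⟨y, hy, rfl⟩; exact ⟨x + y, add_mem hx hy, rfl⟩
          smul_mem' := by
            rintro c _ ⟨x, hx, rfl⟩; exact ⟨c • x, SMulMemClass.smul_mem c hx, rfl⟩ }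
      have : a ∈ S := by
        refine Submodule.topologicalClosure_minimal _ (Submodule.span_le.2 ?_) c1 ha
        rintro _ ⟨i, rfl⟩
        exact ⟨_, hmem i, rfl⟩
      obtain ⟨⟨x, y⟩, hx, rfl⟩ := this
      exact ⟨y, hx⟩
    · rintro ⟨b, hb⟩
      exact hmin ((Submodule.span ℂ (Set.range s)).topologicalClosure.comap (LinearMap.fst ℂ A B))
        ((Submodule.isClosed_topologicalClosure _).preimage continuous_fst)
        (fun i => subset_closure (Submodule.subset_span ⟨i, rfl⟩)) _ hb
  · intro a
    constructor
    · intro ha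
      let S : Submodule ℂ B :=
        { carrier := (NonUnitalStarAlgHom.snd ℂ A B) '' (G : Set (A × B))
          zero_mem' := ⟨0, zero_mem G, rfl⟩
          add_mem' := by
            rintro _ _ ⟨x, hx, rfl⟩ ⟨y, hy, rfl⟩; exact ⟨x + y, add_mem hx hy, rfl⟩
          smul_mem' := by
            rintro c _ ⟨x, hx, rfl⟩; exact ⟨c • x, SMulMemClass.smul_mem c hx, rfl⟩ }
      have : a ∈ S := by
        refine Submodule.topologicalClosure_minimal _ (Submodule.span_le.2 ?_) c2 ha
        rintro _ ⟨i, rfl⟩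
        exact ⟨_, hmem i, rfl⟩
      obtain ⟨⟨x, y⟩, hx, rfl⟩ := this
      exact ⟨x, hx⟩
    · rintro ⟨b, hb⟩
      exact hmin ((Submodule.span ℂ (Set.range t)).topologicalClosure.comap (LinearMap.snd ℂ A B))
        ((Submodule.isClosed_topologicalClosure _).preimage continuous_snd)
        (fun i => subset_closure (Submodule.subset_span ⟨i, rfl⟩)) _ hb

theorem abs_iso (G : NonUnitalStarSubalgebra ℂ (A × B)) (SA : StarSubalgebra ℂ A)
    (ker : NonUnitalStarSubalgebra ℂ SA) (CV : NonUnitalStarSubalgebra ℂ B)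
    (h1 : ∀ b, ((0 : A), b) ∈ G → b = 0) (h2 : ∀ a, (a, (0 : B)) ∈ G → a = 0)
    (hk : ∀ x : SA, x ∈ ker ↔ ∃ b, ((x : A), b) ∈ G) (hSA : ∀ p ∈ G, p.1 ∈ SA)
    (hCV : ∀ b, b ∈ CV ↔ ∃ a, (a, b) ∈ G) : Nonempty (ker ≃⋆ₐ[ℂ] CV) := by
  have u1 : ∀ a b b', (a, b) ∈ G → (a, b') ∈ G → b = b' := by
    intro a b b' h h'
    have := sub_mem h h'
    rw [Prod.mk_sub_mk, sub_self] at this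
    exact sub_eq_zero.1 (h1 _ this)
  have u2 : ∀ a a' b, (a, b) ∈ G → (a', b) ∈ G → a = a' := by
    intro a b b' h h'
    have := sub_mem h h'
    rw [Prod.mk_sub_mk, sub_self] at this
    exact sub_eq_zero.1 (h2 _ this)
  have e1 : ∀ x : ker, ∃ y : CV, (((x : SA) : A), (y : B)) ∈ G := by
    intro x
    obtain ⟨b, hb⟩ := (hk x).1 x.2
    exact ⟨⟨b, (hCV b).2 ⟨_, hb⟩⟩, hb⟩
  have e2 : ∀ y : CV, ∃ x : ker, (((x : SA) : A), (y : B)) ∈ G := by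
    intro y
    obtain ⟨a, ha⟩ := (hCV y).1 y.2
    exact ⟨⟨⟨a, hSA _ ha⟩, (hk _).2 ⟨_, ha⟩⟩, ha⟩
  choose F hF using e1
  choose F' hF' using e2
  exact ⟨{
    toFun := F
    invFun := F'
    left_inv := fun x => Subtype.ext (Subtype.ext (u2 _ _ _ (hF' (F x)) (hF x)))
    right_inv := fun y => Subtype.ext (u1 _ _ _ (hF (F' y)) (hF' y))
    map_mul' := fun x y => Subtype.ext (u1 _ _ _ (hF (x * y)) (mul_mem (hF x) (hF y)))
    map_add' := fun x y => Subtype.ext (u1 _ _ _ (hF (x + y)) (add_mem (hF x) (hF y)))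
    map_star' := fun x => Subtype.ext (u1 _ _ _ (hF (star x)) (star_mem (hF x)))
    map_smul' := fun c x => Subtype.ext (u1 _ _ _ (hF (c • x)) (SMulMemClass.smul_mem c (hF x))) }⟩

end AbstractKernel


section CircleFourier

open MeasureTheory AddCircle

/-- The monomial `z ↦ z ^ a`. -/
def cmono (a : ℤ) : C(Circle, ℂ) := ⟨fun z => ((z ^ a : Circle) : ℂ), continuous_subtype_val.comp (continuous_zpow a)⟩

theorem cmono_apply (a : ℤ) (z : Circle) : cmono a z = ((z ^ a : Circle) : ℂ) := rfl

/-- The homeomorphism `ℝ/ℤ → 𝕋`. -/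
def hcirc : AddCircle (1 : ℝ) ≃ₜ Circle := homeomorphCircle (one_ne_zero : (1 : ℝ) ≠ 0)

/-- Pulling back to `ℝ/ℤ`. -/
def pullC : C(Circle, ℂ) →L[ℂ] C(AddCircle (1 : ℝ), ℂ) :=
  ⟨(ContinuousMap.compRightAlgHom ℂ ℂ (hcirc : C(AddCircle (1 : ℝ), Circle))).toLinearMap,
    ContinuousMap.compRightAlgHom_continuous ..⟩

/-- Pulling back to `𝕋`. -/
def pushC : C(AddCircle (1 : ℝ), ℂ) →L[ℂ] C(Circle, ℂ) :=
  ⟨(ContinuousMap.compRightAlgHom ℂ ℂ (hcirc.symm : C(Circle, AddCircle (1 : ℝ)))).toLinearMap,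
    ContinuousMap.compRightAlgHom_continuous ..⟩

theorem pullC_apply (g : C(Circle, ℂ)) (x : AddCircle (1 : ℝ)) : pullC g x = g (hcirc x) := rfl

theorem pushC_apply (g : C(AddCircle (1 : ℝ), ℂ)) (x : Circle) : pushC g x = g (hcirc.symm x) := rfl

theorem pull_cmono (a : ℤ) : pullC (cmono a) = fourier a := by
  ext x
  rw [pullC_apply, cmono_apply, fourier_apply, hcirc, homeomorphCircle_apply, toCircle_zsmul]

theorem push_pull (g : C(Circle, ℂ)) : pushC (pullC g) = g := by
  ext x
  rw [pushC_apply, pullC_apply, Homeomorph.apply_symm_apply]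

/-- Fourier coefficients. -/
def cc (a : ℤ) : C(Circle, ℂ) →L[ℂ] ℂ :=
  (innerSL ℂ (fourierLp 2 a : Lp ℂ 2 (@haarAddCircle 1 _))) ∘L
    (ContinuousMap.toLp 2 haarAddCircle ℂ) ∘L pullC

theorem cc_cmono (a b : ℤ) : cc a (cmono b) = if a = b then 1 else 0 := by
  have h := (orthonormal_iff_ite.1 (@orthonormal_fourier 1 _)) a b
  rw [← h, cc, ContinuousLinearMap.comp_apply, ContinuousLinearMap.comp_apply, pull_cmono]
  rfl

theorem cc_inj (g : C(Circle, ℂ)) (h : ∀ a, cc a g = 0) : g = 0 := by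
  have h1 : (ContinuousMap.toLp 2 haarAddCircle ℂ (pullC g) : Lp ℂ 2 (@haarAddCircle 1 _)) = 0 := by
    apply (@fourierBasis 1 _).repr.injective
    rw [map_zero]
    ext a
    rw [HilbertBasis.repr_apply_apply, coe_fourierBasis]
    exact h a
  have h2 : pullC g = 0 := by
    apply ContinuousMap.toLp_injective (p := 2) (𝕜 := ℂ) (@haarAddCircle 1 _)
    rw [h1, map_zero]
  rw [← push_pull g, h2, map_zero]

theorem abs_dense {E F : Type*} [NormedAddCommGroup E] [NormedSpace ℂ E] [NormedAddCommGroup F]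
    [NormedSpace ℂ F] (s : Set E) (hs : (Submodule.span ℂ s).topologicalClosure = ⊤)
    (L : E →L[ℂ] F) (S : Submodule ℂ F) (hS : IsClosed (S : Set F)) (h : ∀ x ∈ s, L x ∈ S) (x : E) :
    L x ∈ S := by
  have h1 : (Submodule.span ℂ s).topologicalClosure ≤ S.comap L.toLinearMap :=
    Submodule.topologicalClosure_minimal _ (Submodule.span_le.2 h) (hS.preimage L.continuous)
  rw [hs] at h1
  exact h1 (x := x) trivial

theorem cmono_dense (S : Submodule ℂ C(Circle, ℂ)) (hS : IsClosed (S : Set C(Circle, ℂ)))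
    (h : ∀ a, cmono a ∈ S) (g : C(Circle, ℂ)) : g ∈ S := by
  rw [← push_pull g]
  refine abs_dense _ (@span_fourier_closure_eq_top 1 _) pushC S hS ?_ _
  rintro _ ⟨a, rfl⟩
  rw [← pull_cmono, push_pull]; exact h a

end CircleFourier

section CompactApprox

open scoped InnerProductSpace
open Filter Topology

variable {K : Type} [DecidableEq K]

/-- Matrix units. -/
def EE (k l : K) : Hl K →L[ℂ] Hl K := InnerProductSpace.rankOne ℂ (bv k) (bv l)

theorem EE_apply (k l : K) (x : Hl K) : EE k l x = x l • bv k := by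
  rw [EE, InnerProductSpace.rankOne_apply, inner_bv]

theorem EE_star (k l : K) : star (EE k l) = EE l k := by
  rw [EE, ContinuousLinearMap.star_eq_adjoint, InnerProductSpace.adjoint_rankOne]; rfl

theorem mul_EE (T : Hl K →L[ℂ] Hl K) (k l : K) (x : Hl K) : (T * EE k l) x = x l • T (bv k) := by
  rw [mul_apply_eq_comp, EE_apply, map_smul]

theorem EE_mul (k l k' l' : K) : EE k l * EE k' l' = if k' = l then EE k l' else 0 := by
  ext1 x
  rw [mul_EE, EE_apply, bv_apply]
  by_cases h : k' = l
  · simp [h, EE_apply]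
  · simp [h, Ne.symm h]

/-- Finite projections. -/
def PP (F : Finset K) : Hl K →L[ℂ] Hl K := ∑ k ∈ F, EE k k

theorem PP_apply (F : Finset K) (x : Hl K) : PP F x = ∑ k ∈ F, x k • bv k := by
  rw [PP, sum_apply]
  exact Finset.sum_congr rfl fun k _ => EE_apply k k x

theorem PP_star (F : Finset K) : star (PP F) = PP F := by
  rw [PP, star_sum]
  exact Finset.sum_congr rfl fun k _ => EE_star k k

theorem PP_tendsto (x : Hl K) : Tendsto (fun F => PP F x) atTop (𝓝 x) := by
  have := hasSum_bv x
  simp_rw [PP_apply]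
  exact this

theorem PP_mul_self (F : Finset K) : PP F * PP F = PP F := by
  unfold PP
  rw [Finset.sum_mul]
  refine Finset.sum_congr rfl fun k hk => ?_
  rw [Finset.mul_sum]
  simp_rw [EE_mul]
  rw [Finset.sum_ite_eq' F k]
  simp [hk]

theorem abs_proj {A : Type*} [CStarAlgebra A] (p : A) (h1 : star p = p) (h2 : p * p = p) :
    ‖p‖ ≤ 1 := by
  have h : ‖star p * p‖ = ‖p‖ * ‖p‖ := CStarRing.norm_star_mul_self
  rw [h1, h2] at h
  nlinarith [norm_nonneg p]

theorem PP_norm (F : Finset K) : ‖PP F‖ ≤ 1 := abs_proj (PP F) (PP_star F) (PP_mul_self F)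

/-- 1-Lipschitz maps converging pointwise to the identity converge uniformly on compacta. -/
theorem unif_compact {α X : Type*} [PseudoMetricSpace X] (l : Filter α) (Φ : α → X → X)
    (hl : ∀ i x y, dist (Φ i x) (Φ i y) ≤ dist x y) (C : Set X) (hC : IsCompact C)
    (h : ∀ x ∈ C, Tendsto (fun i => Φ i x) l (𝓝 x)) (ε : ℝ) (hε : 0 < ε) :
    ∀ᶠ i in l, ∀ x ∈ C, dist (Φ i x) x < ε := by
  obtain ⟨t, htC, htf, ht⟩ := hC.finite_cover_balls (show 0 < ε / 3 by positivity)
  have h1 : ∀ᶠ i in l, ∀ y ∈ t, dist (Φ i y) y < ε / 3 := by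
    rw [eventually_all_finite htf]
    intro y hy
    exact (Metric.tendsto_nhds.1 (h y (htC hy))) _ (by positivity)
  filter_upwards [h1] with i hi x hx
  obtain ⟨y, hy, hxy⟩ := Set.mem_iUnion₂.1 (ht hx)
  rw [Metric.mem_ball] at hxy
  have h2 := hi y hy
  have h3 := hl i x y
  have h4 := dist_triangle4 (Φ i x) (Φ i y) y x
  rw [dist_comm y x] at h4
  linarith

theorem abs_unit {E : Type*} [NormedAddCommGroup E] [NormedSpace ℂ E] (S : E →L[ℂ] E) (C : ℝ)
    (hC : 0 ≤ C) (h : ∀ x, ‖x‖ = 1 → ‖S x‖ ≤ C) : ‖S‖ ≤ C := by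
  refine S.opNorm_le_bound hC fun x => ?_
  by_cases hx : x = 0
  · simp [hx]
  have hx' : 0 < ‖x‖ := norm_pos_iff.2 hx
  have h1 : ‖((‖x‖⁻¹ : ℝ) : ℂ) • x‖ = 1 := by
    rw [norm_smul]; simp [hx]
  have h2 := h _ h1
  rw [map_smul, norm_smul, Complex.norm_real, norm_inv, norm_norm] at h2
  rwa [inv_mul_le_iff₀ hx', mul_comm] at h2

theorem abs_left {α E : Type*} [NormedAddCommGroup E] [NormedSpace ℂ E] (l : Filter α)
    (P : α → E →L[ℂ] E) (hP : ∀ i, ‖P i‖ ≤ 1) (hx : ∀ x, Tendsto (fun i => P i x) l (𝓝 x))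
    (T : E →L[ℂ] E) (hT : IsCompactOperator T) :
    Tendsto (fun i => P i * T) l (𝓝 T) := by
  rw [Metric.tendsto_nhds]
  intro ε hε
  have hC := hT.isCompact_closure_image_closedBall (1 : ℝ)
  have := unif_compact l (fun i x => P i x) (fun i x y => by
      rw [dist_eq_norm, dist_eq_norm, ← map_sub]
      exact ((P i).le_opNorm _).trans (by nlinarith [hP i, norm_nonneg (x - y)]))
    _ hC (fun x _ => hx x) (ε / 2) (by positivity)
  filter_upwards [this] with i hi
  rw [dist_eq_norm]
  refine lt_of_le_of_lt (abs_unit (P i * T - T) (ε / 2) (by positivity) ?_) (by linarith)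
  intro x hx
  have := hi (T x) (subset_closure ⟨x, by simp [hx], rfl⟩)
  rw [dist_eq_norm] at this
  exact this.le

theorem PP_left (T : Hl K →L[ℂ] Hl K) (hT : IsCompactOperator T) :
    Tendsto (fun F => PP F * T) atTop (𝓝 T) :=
  abs_left atTop PP PP_norm PP_tendsto T hT

theorem abs_both {α A : Type*} [CStarAlgebra A] (l : Filter α) (P : α → A) (hP : ∀ i, ‖P i‖ ≤ 1)
    (hs : ∀ i, star (P i) = P i) (T : A) (h1 : Tendsto (fun i => P i * T) l (𝓝 T))
    (h2' : Tendsto (fun i => P i * star T) l (𝓝 (star T))) :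
    Tendsto (fun i => P i * T * P i) l (𝓝 T) := by
  have h2 := h2'.star
  simp_rw [star_mul, star_star, hs] at h2
  have h3 : Tendsto (fun i => P i * (T * P i - T)) l (𝓝 0) := by
    have h4 : Tendsto (fun i => ‖T * P i - T‖) l (𝓝 0) := by
      have := (h2.sub_const T).norm
      simpa using this
    refine squeeze_zero_norm (fun i => ?_) h4
    refine (norm_mul_le _ _).trans ?_
    nlinarith [hP i, norm_nonneg (T * P i - T)]
  have := h3.add h1
  rw [zero_add] at this
  refine this.congr fun i => ?_
  noncomm_ring

theorem PP_both (T : Hl K →L[ℂ] Hl K) (hT : T ∈ compactOps (Hl K)) :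
    Tendsto (fun F => PP F * T * PP F) atTop (𝓝 T) :=
  abs_both atTop PP PP_norm PP_star T (PP_left T hT.1) (PP_left _ hT.2)

end CompactApprox


section KernelIso

open scoped InnerProductSpace
open Filter Topology

/-- Post-composition. -/
def lcomp {X E F : Type} [TopologicalSpace X] [CompactSpace X] [NormedAddCommGroup E]
    [NormedSpace ℂ E] [NormedAddCommGroup F] [NormedSpace ℂ F] (L : E →L[ℂ] F) :
    C(X, E) →L[ℂ] C(X, F) where
  toFun f := (⟨L, L.continuous⟩ : C(E, F)).comp f
  map_add' f g := by ext x; simp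
  map_smul' c f := by ext x; simp
  cont := ContinuousMap.continuous_postcomp _

theorem lcomp_apply {X E F : Type} [TopologicalSpace X] [CompactSpace X] [NormedAddCommGroup E]
    [NormedSpace ℂ E] [NormedAddCommGroup F] [NormedSpace ℂ F] (L : E →L[ℂ] F) (f : C(X, E))
    (x : X) : lcomp L f x = L (f x) := rfl

theorem abs_cm_closure {X E : Type} [TopologicalSpace X] [CompactSpace X] [NormedAddCommGroup E]
    [NormedSpace ℂ E] (S : Submodule ℂ C(X, E)) (hS : IsClosed (S : Set C(X, E))) (f : C(X, E))
    (h : ∀ ε > 0, ∃ g ∈ S, ∀ x, dist (g x) (f x) < ε) : f ∈ S := by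
  have h1 : f ∈ closure (S : Set C(X, E)) := by
    refine Metric.mem_closure_iff.2 fun ε hε => ?_
    obtain ⟨g, hg, hgf⟩ := h ε hε
    refine ⟨g, hg, ?_⟩
    rw [dist_comm, ContinuousMap.dist_lt_iff hε]
    exact hgf
  rwa [hS.closure_eq] at h1

theorem abs_ten {X E : Type} [TopologicalSpace X] [CompactSpace X] [NormedAddCommGroup E]
    [NormedSpace ℂ E] (S : Submodule ℂ C(X, E)) (hS : IsClosed (S : Set C(X, E)))
    (L : C(Circle, ℂ) →L[ℂ] C(X, E)) (h : ∀ a, L (cmono a) ∈ S) (g : C(Circle, ℂ)) : L g ∈ S := by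
  let S' : Submodule ℂ C(Circle, ℂ) := S.comap L.toLinearMap
  have : IsClosed (S' : Set C(Circle, ℂ)) := hS.preimage L.continuous
  exact cmono_dense S' this h g

theorem abs_cm_le {X E : Type} [TopologicalSpace X] [CompactSpace X] [NormedAddCommGroup E]
    [NormedSpace ℂ E] (s : Set C(X, E)) (P : E → Prop)
    (S : Submodule ℂ C(X, E)) (hSP : ∀ f, f ∈ S ↔ ∀ x, P (f x)) (hP : IsClosed {e | P e})
    (h : ∀ f ∈ s, ∀ x, P (f x)) (f : C(X, E)) (hf : f ∈ (Submodule.span ℂ s).topologicalClosure) :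
    ∀ x, P (f x) := by
  have hS : IsClosed (S : Set C(X, E)) := by
    have : (S : Set C(X, E)) = ⋂ x : X, (fun f : C(X, E) => f x) ⁻¹' {e | P e} := by
      ext f; rw [Set.mem_iInter]; exact hSP f
    rw [this]
    exact isClosed_iInter fun z => hP.preimage (continuous_eval_const z)
  exact (hSP f).1 (Submodule.topologicalClosure_minimal _
    (Submodule.span_le.2 fun f hf => (hSP f).2 (h f hf)) hS hf)

variable {K : Type} [DecidableEq K]

/-- Bounded operators on `ℓ²(K)`. -/
abbrev BH (K : Type) : Type := Hl K →L[ℂ] Hl K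

/-- Matrix entries. -/
def ent (k l : K) : BH K →L[ℂ] ℂ :=
  (innerSL ℂ (bv k)) ∘L (ContinuousLinearMap.apply ℂ (Hl K) (bv l))

theorem ent_apply (k l : K) (T : BH K) : ent k l T = (T (bv l)) k := by
  rw [← inner_bv]; rfl

/-- `g ↦ g ⊗ e_{kl}`. -/
def ten (k l : K) : C(Circle, ℂ) →L[ℂ] C(Circle, BH K) :=
  lcomp (ContinuousLinearMap.toSpanSingleton ℂ (EE k l))

theorem ten_apply (k l : K) (g : C(Circle, ℂ)) (z : Circle) : ten k l g z = g z • EE k l := rfl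

/-- Generators of `C(𝕋) ⊗ K`. -/
def FF (p : ℤ × K × K) : C(Circle, BH K) := ten p.2.1 p.2.2 (cmono p.1)

theorem FF_apply (a : ℤ) (k l : K) (z : Circle) :
    FF (a, k, l) z = ((z ^ a : Circle) : ℂ) • EE k l := rfl

theorem FF_star (a : ℤ) (k l : K) : star (FF (a, k, l)) = FF (-a, l, k) := by
  ext1 z
  rw [ContinuousMap.star_apply, FF_apply, FF_apply, star_smul, EE_star, zpow_neg,
    Circle.coe_inv_eq_conj]
  rfl

theorem FF_mul (a b : ℤ) (k l k' l' : K) :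
    FF (a, k, l) * FF (b, k', l') = if k' = l then FF (a + b, k, l') else 0 := by
  ext1 z
  rw [ContinuousMap.mul_apply, FF_apply, FF_apply, smul_mul_smul_comm, EE_mul]
  split_ifs with h
  · rw [FF_apply, zpow_add, Circle.coe_mul]
  · rw [smul_zero]; rfl

/-- Entries of operators on `ℓ²(ℤ × K)`. -/
def entL (p : ℤ × ℤ × K × K) : BZ K →L[ℂ] ℂ :=
  (innerSL ℂ (bv (p.1 + p.2.1, p.2.2.1))) ∘L
    (ContinuousLinearMap.apply ℂ (Hl (ℤ × K)) (bv (p.1, p.2.2.2)))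

theorem entL_apply (m a : ℤ) (k l : K) (T : BZ K) :
    entL (m, a, k, l) T = (T (bv (m, l))) (m + a, k) := by
  rw [← inner_bv]; rfl

/-- Fourier coefficients of entries. -/
def entM (p : ℤ × ℤ × K × K) : C(Circle, BH K) →L[ℂ] ℂ :=
  (cc p.2.1) ∘L (lcomp (ent p.2.2.1 p.2.2.2))

theorem entM_FF (m a b : ℤ) (k l k' l' : K) :
    entM (m, a, k, l) (FF (b, k', l')) = if a = b ∧ k = k' ∧ l = l' then 1 else 0 := by
  have h : lcomp (ent k l) (FF (b, k', l')) = (if k = k' ∧ l = l' then (1 : ℂ) else 0) • cmono b := by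
    ext z
    rw [lcomp_apply, FF_apply, map_smul, ent_apply, EE_apply, bv_apply, lp.coeFn_smul,
      Pi.smul_apply, bv_apply, ContinuousMap.smul_apply, cmono_apply]
    by_cases h1 : k = k' <;> by_cases h2 : l = l' <;> simp [h1, h2, eq_comm]
  unfold entM
  rw [ContinuousLinearMap.comp_apply, h, map_smul, cc_cmono]
  by_cases h1 : k = k' <;> by_cases h2 : l = l' <;> simp [h1, h2]

theorem entL_UU (m a b : ℤ) (k l k' l' : K) :
    entL (m, a, k, l) (UU b k' l') = if a = b ∧ k = k' ∧ l = l' then 1 else 0 := by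
  rw [entL_apply, UU_ws b k' l' m l, lp.coeFn_smul, Pi.smul_apply, bv_apply]
  by_cases h1 : k = k' <;> by_cases h2 : l = l' <;> by_cases h3 : a = b <;> simp [h1, h2, h3]

theorem entL_inj (T : BZ K) (h : ∀ p, entL p T = 0) : T = 0 := by
  refine ext_bv ?_
  rintro ⟨m, l⟩
  ext ⟨m', k⟩
  have := h (m, m' - m, k, l)
  rw [entL_apply, add_sub_cancel] at this
  rw [this]; rfl

theorem ent_inj (T : BH K) (h : ∀ k l, ent k l T = 0) : T = 0 := by
  refine ext_bv ?_
  intro l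
  ext k
  have := h k l
  rw [ent_apply] at this
  rw [this]; rfl

theorem entM_inj (f : C(Circle, BH K)) (h : ∀ p, entM p f = 0) : f = 0 := by
  ext1 z
  refine ent_inj _ fun k l => ?_
  have h1 : lcomp (ent k l) f = 0 := cc_inj _ fun a => h (0, a, k, l)
  rw [← lcomp_apply, h1]; rfl

theorem EE_compact (k l : K) : EE k l ∈ compactOps (Hl K) := by
  have h : ∀ k l : K, IsCompactOperator (EE k l) := by
    intro k l
    have h0 : IsCompactOperator (ContinuousLinearMap.toSpanSingleton ℂ (bv k : Hl K)) :=
      isCompactOperator_of_locallyCompactSpace_rng _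
    have h1 := h0.comp_clm (innerSL ℂ (bv l : Hl K))
    exact h1
  refine ⟨h k l, ?_⟩
  rw [EE_star]; exact h l k

theorem compactOps_closed : IsClosed (compactOps (Hl K) : Set (BH K)) := by
  have h1 : IsClosed {f : BH K | IsCompactOperator f} := isClosed_setOfPred_isCompactOperator
  exact h1.inter (h1.preimage continuous_star)

theorem PP_mul_PP (F : Finset K) (T : BH K) :
    PP F * T * PP F = ∑ k ∈ F, ∑ l ∈ F, ent k l T • EE k l := by
  ext1 x
  rw [mul_apply_eq_comp, mul_apply_eq_comp, PP_apply F x, map_sum, map_sum, sum_apply]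
  simp_rw [sum_apply, smul_apply, EE_apply, map_smul, PP_apply, Finset.smul_sum, ent_apply]
  rw [Finset.sum_comm]
  refine Finset.sum_congr rfl fun k _ => Finset.sum_congr rfl fun l _ => ?_
  rw [smul_smul, smul_smul, mul_comm]

/-- Closed span of the generators. -/
def Jsub (K : Type) [DecidableEq K] : Submodule ℂ C(Circle, BH K) :=
  (Submodule.span ℂ (Set.range (FF (K := K)))).topologicalClosure

theorem Jsub_closed : IsClosed (Jsub K : Set C(Circle, BH K)) :=
  Submodule.isClosed_topologicalClosure _

theorem ten_mem (k l : K) (g : C(Circle, ℂ)) : ten k l g ∈ Jsub K := by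
  refine abs_ten (Jsub K) Jsub_closed (ten k l) ?_ g
  intro a
  exact Submodule.le_topologicalClosure _ (Submodule.subset_span ⟨(a, k, l), rfl⟩)

/-- Truncation. -/
def trunc (F : Finset K) (f : C(Circle, BH K)) : C(Circle, BH K) :=
  ∑ k ∈ F, ∑ l ∈ F, ten k l (lcomp (ent k l) f)

theorem trunc_apply (F : Finset K) (f : C(Circle, BH K)) (z : Circle) :
    trunc F f z = PP F * f z * PP F := by
  rw [PP_mul_PP, trunc, ContinuousMap.sum_apply]
  refine Finset.sum_congr rfl fun k _ => ?_
  rw [ContinuousMap.sum_apply]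
  rfl

theorem trunc_mem (F : Finset K) (f : C(Circle, BH K)) : trunc F f ∈ Jsub K :=
  Submodule.sum_mem _ fun k _ => Submodule.sum_mem _ fun l _ => ten_mem k l _

theorem abs_contr {A : Type*} [CStarAlgebra A] (p x y : A) (hp : ‖p‖ ≤ 1) :
    dist (p * x * p) (p * y * p) ≤ dist x y := by
  rw [dist_eq_norm, dist_eq_norm, ← sub_mul, ← mul_sub]
  have h1 := norm_mul_le (p * (x - y)) p
  have h2 := norm_mul_le p (x - y)
  have h3 := norm_nonneg (x - y)
  have h4 := norm_nonneg p
  have h5 := norm_nonneg (p * (x - y))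
  nlinarith

theorem mem_Jsub_iff (f : C(Circle, BH K)) : f ∈ Jsub K ↔ f ∈ compactValued (Hl K) := by
  constructor
  · intro hf
    refine abs_cm_le (Set.range (FF (K := K))) (fun T => T ∈ compactOps (Hl K))
      (compactValued (Hl K)).toSubmodule (fun f => Iff.rfl) compactOps_closed ?_ f hf
    rintro _ ⟨⟨a, k, l⟩, rfl⟩ z
    exact SMulMemClass.smul_mem _ (EE_compact k l)
  · intro hf
    refine abs_cm_closure (Jsub K) Jsub_closed f fun ε hε => ?_
    have h := unif_compact (atTop : Filter (Finset K)) (fun F (T : BH K) => PP F * T * PP F)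
      (fun F x y => abs_contr _ _ _ (PP_norm F)) (Set.range f) (isCompact_range f.continuous)
      (by rintro _ ⟨z, rfl⟩; exact PP_both _ (hf z)) ε hε
    obtain ⟨F, hF⟩ := h.exists
    refine ⟨trunc F f, trunc_mem F f, ?_⟩
    intro z
    rw [trunc_apply]
    exact hF _ ⟨z, rfl⟩

theorem kernel_graph (K : Type) [DecidableEq K] : ∃ G : NonUnitalStarSubalgebra ℂ (BZ K × C(Circle, BH K)),
      (∀ b, ((0 : BZ K), b) ∈ G → b = 0) ∧ (∀ a, (a, (0 : C(Circle, BH K))) ∈ G → a = 0) ∧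
      (∀ a, a ∈ Isub K ↔ ∃ b, (a, b) ∈ G) ∧
      (∀ b, b ∈ compactValued (Hl K) ↔ ∃ a, (a, b) ∈ G) := by
  obtain ⟨G, h1, h2, h3, h4⟩ := abs_graph (A := BZ K) (B := C(Circle, BH K))
    (fun p : ℤ × K × K => UU p.1 p.2.1 p.2.2) FF
    (by
      rintro ⟨a, k, l⟩
      exact ⟨(-a, l, k), UU_star a k l, FF_star a k l⟩)
    (by
      rintro ⟨a, k, l⟩ ⟨b, k', l'⟩
      by_cases h : k' = l
      · refine Or.inl ⟨(a + b, k, l'), ?_, ?_⟩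
        · have := UU_mul a b k l k' l'
          rwa [if_pos h] at this
        · have := FF_mul a b k l k' l'
          rwa [if_pos h] at this
      · refine Or.inr ⟨?_, ?_⟩
        · have := UU_mul a b k l k' l'
          rwa [if_neg h] at this
        · have := FF_mul a b k l k' l'
          rwa [if_neg h] at this)
    entL entM
    (by
      rintro ⟨m, a, k, l⟩ ⟨b, k', l'⟩
      rw [entM_FF]; exact entL_UU _ _ _ _ _ _ _)
    entL_inj entM_inj
  exact ⟨G, h1, h2, h3, fun b => (mem_Jsub_iff b).symm.trans (h4 b)⟩

end KernelIso

/-- For every `n ≥ 1` (here `n` is replaced by `n+1`) and real `q > 1`, there is a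
surjective unital *-homomorphism `φ : A_n(q) → A_{n-1}(q)` whose kernel is isomorphic,
as a non-unital C*-algebra (via a *-algebra isomorphism), to
`C(𝕋, K(H_n)) = C(𝕋) ⊗ K(ℓ²(ℕⁿ))`.  Equivalently, there is a short exact sequence
`0 → C(𝕋) ⊗ K(ℓ²(ℤ_{≥0}ⁿ)) → C(S_q^{2n+1}) → C(S_q^{2n-1}) → 0`. -/
theorem stmt_5 (n : ℕ) (q : ℝ) (hq : 1 < q)
    (v : Fin (n + 2) → (HZ (n + 1) →L[ℂ] HZ (n + 1)))
    (v' : Fin (n + 1) → (HZ n →L[ℂ] HZ n))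
    (hv : IsVFamily q v) (hv' : IsVFamily q v') :
    ∃ φ : (sphereAlg v) →⋆ₐ[ℂ] (sphereAlg v'),
      Function.Surjective φ ∧
      Nonempty ((starAlgHomKer φ) ≃⋆ₐ[ℂ] (compactValued (Hn (n + 1)))) := by
  obtain ⟨φ, hs, hk, hI⟩ := main_ext hq hv hv'
  obtain ⟨G, h1, h2, h3, h4⟩ := kernel_graph (KN (n + 1))
  refine ⟨φ, hs, ?_⟩
  exact abs_iso (A := BZ (KN (n + 1))) (B := C(Circle, BH (KN (n + 1)))) G (sphereAlg v)
    (starAlgHomKer φ) (compactValued (Hl (KN (n + 1)))) h1 h2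
    (fun x => (hk x).trans (h3 x)) (fun p hp => hI p.1 ((h3 p.1).2 ⟨p.2, hp⟩)) h4
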